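/- arXiv:2602.19195 — 5 statements merged into one kernel-verified Lean document; each statement's English description precedes it below -/
import Mathlib

section
/- (Zagier's formula) For all nonnegative integers a and b, H(a,b) = 2 · Σ_{k=1}^{a+b+1} (-1)^k c_{a,b,k} · ζ(2k+1) · ζ({2}^{a+b+1-k}), where c_{a,b,k} := C(2k, 2a+2) - (1 - 1/2^{2k}) · C(2k, 2b+1) and C(n,m) denotes the binomial coefficient. -/
/-!
The sum defining `H(a,b)` is grouped according to the index `k + 1` that carries the exponent `3`:
`H(a,b) = ∑_k head_a(k) · (k+1)^{-3} · tail_b(k+1)`, where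
`head_a(k) = ∑_{1 ≤ m₁ < ⋯ < m_a ≤ k} ∏ 1/m_i²` and `tail_b(k) = ∑_{k < m₁ < ⋯ < m_b} ∏ 1/m_i²`.
Both factors are identified by second-order differential equations, with
`P_j(t) = (2t)^j / j!`, `U_j(t) = (π-2t)^j / j!` and `v_k = 4^k / C(2k,k)`.

* Tails: `tail_b(k) = (2/π) v_k ∫₀^{π/2} U_{2b}(t) sin^{2k} t dt` (`mzvTail_replicate_two`). Two
  integrations by parts show that the right-hand side satisfies the recursion of the tails
  (`T_sub_succ`), and it tends to `0` as `k → ∞`. At `k = 0` this gives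
  `ζ({2}^n) = π^{2n}/(2n+1)!`.
* Heads: `∑_k head_a(k) v_{k+1} (k+1)^{-2} sin^{2k+2} t = P_{2a+2}(t)`, the power series of the even
  powers of the arcsine (`tendsto_Y`). The second derivative of the partial sums for `a` is four
  times the partial sums for `a - 1`, up to a boundary term that decays like `k sin^{2k} t`.

Combining the two by dominated convergence gives (`H_eq_integral`)
`H(a,b) = (2/π) ∫₀^{π/2} P_{2a+2}(t) cot t U_{2b+1}(t) dt`.
Now `cot t = 2 ∑_{n ≥ 1} sin 2nt`, in the sense of a finite identity whose remainder integrates to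
something tending to `0` by the Riemann–Lebesgue lemma (`tendsto_sine_coeff`). The sine coefficients
of the polynomial `P_{2a+2} U_{2b+1}` are found by repeated integration by parts (`sine_coeff`): only
derivatives of even order `2k` at the end points occur, and Leibniz' rule has a single surviving term
at each end, with binomial coefficients `C(2k,2a+2)` and `C(2k,2b+1)`. Summing over `n` yields
`ζ(2k+1)` at `0` and `∑ (-1)^n/n^{2k+1} = -(1 - 2^{-2k}) ζ(2k+1)` at `π/2`.
-/

open Real Finset

/-- The multiple zeta value `ζ(s₁,…,s_r) = ∑_{1 ≤ k₁ < ⋯ < k_r} ∏ 1/k_i^{s_i}`,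
encoded via strictly increasing functions `f : Fin r → ℕ` with `k_i = f i + 1`. -/
noncomputable def mzv (s : List ℕ) : ℝ :=
  ∑' f : {f : Fin s.length → ℕ // StrictMono f},
    ∏ i, (1 : ℝ) / ((f.1 i + 1 : ℕ) : ℝ) ^ (s.get i)

/-- `H(a,b) = ζ({2}^a, 3, {2}^b)`. -/
noncomputable def H (a b : ℕ) : ℝ :=
  mzv (List.replicate a 2 ++ 3 :: List.replicate b 2)

namespace Zagier

open scoped ENNReal

/-! ### Nested sums: heads and tails -/

/-- The tail `∑_{n < k₁ < ⋯ < k_r} ∏ 1/k_i^{s_i}` of the multiple zeta series of `s`, as an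
extended nonnegative real. The smallest index is `k₁ = n + j + 1`. -/
noncomputable def mzvTail : List ℕ → ℕ → ℝ≥0∞
  | [], _ => 1
  | x :: s, n => ∑' j : ℕ,
      ENNReal.ofReal (1 / ((n + j + 1 : ℕ) : ℝ) ^ x) * mzvTail s (n + j + 1)

/-- Splitting a strictly increasing tuple with entries `≥ n` into its first entry `n + j` and a
strictly increasing tuple with entries `≥ n + j + 1`. -/
def consEquiv (r n : ℕ) :
    (Σ j : ℕ, {g : Fin r → ℕ // StrictMono g ∧ ∀ i, n + j + 1 ≤ g i}) ≃
      {f : Fin (r + 1) → ℕ // StrictMono f ∧ ∀ i, n ≤ f i} where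
  toFun p := ⟨Fin.cons (n + p.1) p.2.1, by
    constructor
    · rw [Fin.strictMono_iff_lt_succ]
      intro i
      cases r with
      | zero => exact i.elim0
      | succ r =>
        refine Fin.cases ?_ (fun i => ?_) i
        · have := p.2.2.2 0
          simpa using by omega
        · rw [← Fin.succ_castSucc, Fin.cons_succ, Fin.cons_succ]
          exact p.2.2.1 (by simp [Fin.lt_def])
    · intro i
      refine Fin.cases ?_ (fun i => ?_) i
      · simp
      · have := p.2.2.2 i
        simp only [Fin.cons_succ]
        omega⟩
  invFun f := ⟨f.1 0 - n, fun i => f.1 i.succ,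
    fun _ _ hij => f.2.1 (Fin.succ_lt_succ_iff.2 hij), fun i => by
      have h1 := f.2.2 0
      have h2 : f.1 0 < f.1 i.succ := f.2.1 (Fin.succ_pos i)
      change n + (f.1 0 - n) + 1 ≤ f.1 i.succ
      omega⟩
  left_inv := by
    rintro ⟨j, g, hg⟩
    have : n + j - n = j := by omega
    ext <;> simp
  right_inv := by
    rintro ⟨f, hf, hn⟩
    ext i
    refine Fin.cases ?_ (fun i => ?_) i
    · have := hn 0
      simp only [Fin.cons_zero]
      omega
    · simp

theorem mzvTail_eq_tsum (s : List ℕ) (n : ℕ) :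
    mzvTail s n = ∑' f : {f : Fin s.length → ℕ // StrictMono f ∧ ∀ i, n ≤ f i},
      ∏ i, ENNReal.ofReal ((1 : ℝ) / ((f.1 i + 1 : ℕ) : ℝ) ^ (s.get i)) := by
  induction s generalizing n with
  | nil =>
    rw [mzvTail]
    have : Unique {f : Fin ([] : List ℕ).length → ℕ // StrictMono f ∧ ∀ i, n ≤ f i} :=
      { default := ⟨fun i => i.elim0, fun i => i.elim0, fun i => i.elim0⟩
        uniq := fun f => Subtype.ext (funext fun i => i.elim0) }
    rw [tsum_fintype]
    simp
  | cons x s ih =>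
    rw [mzvTail]
    simp only [ih, ← ENNReal.tsum_mul_left]
    rw [← ENNReal.tsum_sigma' (β := fun j : ℕ =>
      {g : Fin s.length → ℕ // StrictMono g ∧ ∀ i, n + j + 1 ≤ g i})
      (fun p => ENNReal.ofReal (1 / ((n + p.1 + 1 : ℕ) : ℝ) ^ x) *
        ∏ i, ENNReal.ofReal ((1 : ℝ) / ((p.2.1 i + 1 : ℕ) : ℝ) ^ (s.get i)))]
    refine Eq.trans ?_ ((consEquiv s.length n).tsum_eq _)
    refine tsum_congr fun p => ?_
    change _ = ∏ i : Fin (s.length + 1), _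
    rw [Fin.prod_univ_succ]
    simp [consEquiv]

/-- The real series `mzv s` has nonnegative terms, so it may be evaluated in `ℝ≥0∞`, where no
summability is needed for rearrangements. -/
theorem mzv_eq_toReal (s : List ℕ) : mzv s = (mzvTail s 0).toReal := by
  rw [mzvTail_eq_tsum, ENNReal.tsum_toReal_eq]
  · rw [mzv, ← (Equiv.subtypeEquivRight (fun f : Fin s.length → ℕ =>
      (show StrictMono f ∧ (∀ i, 0 ≤ f i) ↔ StrictMono f by simp))).tsum_eq]
    refine tsum_congr fun f => ?_
    rw [ENNReal.toReal_prod]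
    refine Finset.prod_congr rfl fun i _ => ?_
    rw [ENNReal.toReal_ofReal (by positivity)]
    rfl
  · intro f
    exact ENNReal.prod_ne_top fun i _ => ENNReal.ofReal_ne_top

/-- The truncated sum `∑_{1 ≤ m₁ < ⋯ < m_a ≤ m} ∏ 1/m_i²`. -/
noncomputable def head : ℕ → ℕ → ℝ
  | 0, _ => 1
  | a + 1, m => ∑ k ∈ Finset.range m, head a k / ((k + 1 : ℕ) : ℝ) ^ 2

theorem head_nonneg (a m : ℕ) : 0 ≤ head a m := by
  induction a generalizing m with
  | zero => simp [head]
  | succ a ih => exact Finset.sum_nonneg fun k _ => div_nonneg (ih k) (by positivity)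

theorem head_succ_succ (a m : ℕ) :
    head (a + 1) (m + 1) = head (a + 1) m + head a m / ((m + 1 : ℕ) : ℝ) ^ 2 := by
  simp only [head, Finset.sum_range_succ]

theorem tsum_swap_lt (F : ℕ → ℕ → ℝ≥0∞) :
    ∑' k, ∑' j, F k (k + j + 1) = ∑' m, ∑ k ∈ Finset.range m, F k m := by
  have h1 : ∀ k, ∑' j, F k (k + j + 1) = ∑' m, if k < m then F k m else 0 := by
    intro k
    have hinj : Function.Injective (fun j : ℕ => k + j + 1) := fun a b h => by
      simp only at h; omega
    rw [← hinj.tsum_eq (f := fun m => if k < m then F k m else 0)]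
    · refine tsum_congr fun j => ?_
      rw [if_pos (by omega)]
    · intro m hm
      have : k < m := by
        by_contra h
        simp [h] at hm
      exact ⟨m - k - 1, by simp only; omega⟩
  simp only [h1]
  rw [ENNReal.tsum_comm]
  refine tsum_congr fun m => ?_
  rw [tsum_eq_sum (s := Finset.range m)]
  · exact Finset.sum_congr rfl fun k hk => if_pos (Finset.mem_range.1 hk)
  · intro k hk
    exact if_neg (by simpa using hk)

/-- Summing out the `a` leading entries `2` first turns them into the truncated sum `head a`. -/
theorem mzvTail_replicate_append (a x : ℕ) (s : List ℕ) :
    mzvTail (List.replicate a 2 ++ x :: s) 0 = ∑' k : ℕ,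
      ENNReal.ofReal (head a k / ((k + 1 : ℕ) : ℝ) ^ x) * mzvTail s (k + 1) := by
  induction a generalizing x s with
  | zero => simp [mzvTail, head]
  | succ a ih =>
    rw [List.replicate_succ', List.append_assoc, List.singleton_append, ih 2 (x :: s)]
    have := tsum_swap_lt (fun k m => ENNReal.ofReal (head a k / ((k + 1 : ℕ) : ℝ) ^ 2) *
      (ENNReal.ofReal (1 / ((m + 1 : ℕ) : ℝ) ^ x) * mzvTail s (m + 1)))
    simp only [mzvTail, ← ENNReal.tsum_mul_left]
    refine Eq.trans ?_ (this.trans ?_)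
    · refine tsum_congr fun k => tsum_congr fun j => ?_
      rw [show k + 1 + j + 1 = k + j + 1 + 1 by ring]
    · refine tsum_congr fun m => ?_
      rw [← Finset.sum_mul, ← ENNReal.ofReal_sum_of_nonneg
        (fun k _ => div_nonneg (head_nonneg a k) (by positivity)), ← mul_assoc]
      change ENNReal.ofReal (head (a + 1) m) * _ * _ = _
      rw [← ENNReal.ofReal_mul (head_nonneg (a + 1) m), mul_one_div]

open Filter Topology intervalIntegral
open scoped Nat

/-! ### Tails as integrals against even powers of the sine -/

/-- The normalised power `(π - 2t)^j / j!`; its derivative is `-2` times the previous one. -/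
noncomputable def U (j : ℕ) (t : ℝ) : ℝ := (π - 2 * t) ^ j / (j ! : ℝ)

/-- The normalised power `(2t)^j / j!`; its derivative is `2` times the previous one. -/
noncomputable def P (j : ℕ) (t : ℝ) : ℝ := (2 * t) ^ j / (j ! : ℝ)

theorem U_zero (t : ℝ) : U 0 t = 1 := by simp [U]

theorem P_zero (t : ℝ) : P 0 t = 1 := by simp [P]

theorem hasDerivAt_U (j : ℕ) (t : ℝ) : HasDerivAt (U (j + 1)) (-2 * U j t) t := by
  have h := ((((hasDerivAt_id t).const_mul 2).const_sub π).pow (j + 1)).div_const ((j + 1)! : ℝ)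
  refine h.congr_deriv ?_
  simp only [U, id, Nat.factorial_succ]
  have : (j ! : ℝ) ≠ 0 := by positivity
  push_cast
  field_simp

theorem hasDerivAt_P (j : ℕ) (t : ℝ) : HasDerivAt (P (j + 1)) (2 * P j t) t := by
  have h := (((hasDerivAt_id t).const_mul 2).pow (j + 1)).div_const ((j + 1)! : ℝ)
  refine h.congr_deriv ?_
  simp only [P, id, Nat.factorial_succ]
  have : (j ! : ℝ) ≠ 0 := by positivity
  push_cast
  field_simp

theorem continuous_U (j : ℕ) : Continuous (U j) := by unfold U; fun_prop

theorem continuous_P (j : ℕ) : Continuous (P j) := by unfold P; fun_prop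

theorem U_nonneg (j : ℕ) {t : ℝ} (h : t ≤ π / 2) : 0 ≤ U j t :=
  div_nonneg (pow_nonneg (by linarith) _) (by positivity)

theorem P_nonneg (j : ℕ) {t : ℝ} (h : 0 ≤ t) : 0 ≤ P j t :=
  div_nonneg (pow_nonneg (by linarith) _) (by positivity)

theorem U_pi_div_two (j : ℕ) : U (j + 1) (π / 2) = 0 := by
  simp [U, mul_div_cancel₀]

/-- The Wallis ratio `4^k / C(2k,k)`, the reciprocal of the mean value of `sin^{2k}`. -/
noncomputable def v (k : ℕ) : ℝ := 4 ^ k / (k.centralBinom : ℝ)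

theorem v_pos (k : ℕ) : 0 < v k := by
  have := Nat.centralBinom_pos k
  unfold v; positivity

theorem v_zero : v 0 = 1 := by simp [v]

theorem v_succ (k : ℕ) : v (k + 1) * (2 * k + 1) = v k * (2 * k + 2) := by
  have h0 : (k.centralBinom : ℝ) ≠ 0 := by exact_mod_cast Nat.centralBinom_ne_zero k
  have h1 : ((k + 1).centralBinom : ℝ) ≠ 0 := by exact_mod_cast Nat.centralBinom_ne_zero (k + 1)
  have h : ((k : ℝ) + 1) * ((k + 1).centralBinom : ℝ) = 2 * (2 * k + 1) * (k.centralBinom : ℝ) := by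
    exact_mod_cast Nat.succ_mul_centralBinom_succ k
  unfold v
  rw [div_mul_eq_mul_div, div_mul_eq_mul_div, div_eq_div_iff h1 h0, pow_succ]
  linear_combination (-2 * 4 ^ k) * h

theorem v_le (k : ℕ) : v k ≤ 2 * k + 1 := by
  induction k with
  | zero => simp [v_zero]
  | succ k ih =>
    have h := v_succ k
    have hk : (0 : ℝ) ≤ k := by positivity
    have := v_pos k
    push_cast
    by_contra hcon
    push Not at hcon
    nlinarith

/-- The closed form `(2/π) v_k ∫ U_{2b} sin^{2k}` of the tail
`∑_{k < m₁ < ⋯ < m_b} ∏ 1/m_i²`. -/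
noncomputable def T (b k : ℕ) : ℝ :=
  2 / π * v k * ∫ t in (0 : ℝ)..(π / 2), U (2 * b) t * sin t ^ (2 * k)

theorem T_nonneg (b k : ℕ) : 0 ≤ T b k := by
  refine mul_nonneg (mul_nonneg (by positivity) (v_pos k).le) ?_
  refine integral_nonneg (by positivity) fun t ht => ?_
  exact mul_nonneg (U_nonneg _ ht.2) (by rw [pow_mul]; positivity)

/-- Integration by parts twice against `sin^{2k+2}`. -/
theorem integral_parts_sin (g g' g'' : ℝ → ℝ) (hg : ∀ t, HasDerivAt g (g' t) t)
    (hg' : ∀ t, HasDerivAt g' (g'' t) t) (hc : Continuous g'') (h0 : g' (π / 2) = 0) (k : ℕ) :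
    ∫ t in (0 : ℝ)..(π / 2), g'' t * sin t ^ (2 * (k + 1)) =
      (2 * k + 2) * ((2 * k + 1) * (∫ t in (0 : ℝ)..(π / 2), g t * sin t ^ (2 * k)) -
        (2 * k + 2) * ∫ t in (0 : ℝ)..(π / 2), g t * sin t ^ (2 * (k + 1))) := by
  have hgc : Continuous g := continuous_iff_continuousAt.2 fun t => (hg t).continuousAt
  have hd : ∀ t, HasDerivAt
      (fun t => g' t * sin t ^ (2 * k + 2) - (2 * k + 2) * (g t * (sin t ^ (2 * k + 1) * cos t)))
      (g'' t * sin t ^ (2 * (k + 1)) - (2 * k + 2) * ((2 * k + 1) * (g t * sin t ^ (2 * k)) -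
        (2 * k + 2) * (g t * sin t ^ (2 * (k + 1))))) t := by
    intro t
    have h1 := (hg' t).mul ((hasDerivAt_sin t).pow (2 * k + 2))
    have h2 := ((hg t).mul (((hasDerivAt_sin t).pow (2 * k + 1)).mul
      (hasDerivAt_cos t))).const_mul (2 * (k : ℝ) + 2)
    refine (h1.sub h2).congr_deriv ?_
    have hs : cos t * cos t = 1 - sin t ^ 2 := by rw [← sq, cos_sq']
    simp only [Nat.add_sub_cancel, show 2 * k + 2 - 1 = 2 * k + 1 by omega, Pi.pow_apply,
      Pi.mul_apply]
    push_cast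
    linear_combination (-(2 * (k : ℝ) + 2) * (2 * k + 1) * g t * sin t ^ (2 * k)) * hs
  have hI := integral_eq_sub_of_hasDerivAt (a := 0) (b := π / 2) (fun t _ => hd t)
    (Continuous.intervalIntegrable (by fun_prop) _ _)
  simp only [h0, cos_pi_div_two, sin_zero] at hI
  rw [integral_sub, integral_const_mul, integral_sub, integral_const_mul, integral_const_mul] at hI
  · simp at hI
    linarith
  all_goals exact Continuous.intervalIntegrable (by fun_prop) _ _

theorem T_zero_left (k : ℕ) : T 0 k = 1 := by
  induction k with
  | zero =>
    simp [T, U_zero, v_zero]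
  | succ k ih =>
    rw [← ih]
    have h := integral_parts_sin (U 0) (fun _ => 0) (fun _ => 0)
      (fun t => by
        have : U 0 = fun _ => 1 := funext U_zero
        rw [this]; exact hasDerivAt_const _ _) (fun t => hasDerivAt_const _ _)
      continuous_const rfl k
    simp only [zero_mul, integral_zero] at h
    have hv := v_succ k
    have hk : (2 * (k : ℝ) + 2) ≠ 0 := by positivity
    have hk' : (2 * (k : ℝ) + 1) ≠ 0 := by positivity
    have h' := (mul_eq_zero.1 h.symm).resolve_left hk
    simp only [T, mul_zero] at *
    apply mul_left_cancel₀ hk'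
    linear_combination (-(2 / π) * v k) * h' + 2 / π * (∫ t in (0 : ℝ)..(π / 2), U 0 t * sin t ^ (2 * (k + 1))) * hv

/-- The closed form satisfies the recursion of the tails: integrate by parts twice and use that
the second derivative of `U_{2b+2}` is `4 U_{2b}`. -/
theorem T_sub_succ (b k : ℕ) :
    T (b + 1) k - T (b + 1) (k + 1) = T b (k + 1) / ((k + 1 : ℕ) : ℝ) ^ 2 := by
  have h := integral_parts_sin (U (2 * b + 2)) (fun t => -2 * U (2 * b + 1) t)
      (fun t => 4 * U (2 * b) t) (fun t => hasDerivAt_U _ _)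
      (fun t => ((hasDerivAt_U (2 * b) t).const_mul (-2)).congr_deriv (by ring))
      ((continuous_U _).const_mul 4) (by simp [U_pi_div_two]) k
  have hv := v_succ k
  simp only [mul_assoc, integral_const_mul] at h
  have hk : ((k : ℝ) + 1) ≠ 0 := by positivity
  have hk' : (2 * (k : ℝ) + 1) ≠ 0 := by positivity
  simp only [T, show 2 * (b + 1) = 2 * b + 2 by ring]
  push_cast
  set A := ∫ t in (0 : ℝ)..(π / 2), U (2 * b + 2) t * sin t ^ (2 * k)
  set B := ∫ t in (0 : ℝ)..(π / 2), U (2 * b + 2) t * sin t ^ (2 * (k + 1))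
  set C := ∫ t in (0 : ℝ)..(π / 2), U (2 * b) t * sin t ^ (2 * (k + 1))
  rw [eq_div_iff (by positivity)]
  linear_combination (-(2 / π) * v (k + 1) / 4) * h -
    (2 / π) * A * (k + 1) / 2 * hv

/-- A decay bound in `k`, which turns the recursion for `T` into a convergent telescoping sum. -/
theorem T_one_bound (b k : ℕ) :
    T (b + 1) k ≤ π ^ (2 * b + 2) / ((2 * b + 2)! : ℝ) * (1 / (2 * k + 2)) := by
  have hbound : ∀ t ∈ Set.Icc (0 : ℝ) (π / 2), U (2 * (b + 1)) t * sin t ^ (2 * k) ≤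
      π ^ (2 * b + 2) / ((2 * b + 2)! : ℝ) *
        (U 0 t * sin t ^ (2 * k) - U 0 t * sin t ^ (2 * (k + 1))) := by
    intro t ht
    -- Jordan's inequality at `π/2 - t`; hence `U_{2b+2}` is bounded by a multiple of `1 - sin²`,
    -- and the resulting integral is explicit.
    have hc : π - 2 * t ≤ π * cos t := by
      have := mul_le_sin (x := π / 2 - t) (by linarith [ht.2]) (by linarith [ht.1])
      rw [sin_pi_div_two_sub] at this
      have hpi := pi_pos
      have h2 : π * (2 / π * (π / 2 - t)) ≤ π * cos t := mul_le_mul_of_nonneg_left this hpi.le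
      have h3 : π * (2 / π * (π / 2 - t)) = π - 2 * t := by field_simp
      linarith
    have hnn : 0 ≤ π - 2 * t := by linarith [ht.2]
    have hcc : 0 ≤ cos t := cos_nonneg_of_mem_Icc ⟨by linarith [ht.1, pi_pos], ht.2⟩
    have h4 : (π - 2 * t) ^ (2 * b + 2) ≤ π ^ (2 * b + 2) * cos t ^ 2 := by
      calc (π - 2 * t) ^ (2 * b + 2) = (π - 2 * t) ^ (2 * b) * (π - 2 * t) ^ 2 := pow_add _ _ _
        _ ≤ π ^ (2 * b) * (π * cos t) ^ 2 := by
            gcongr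
            linarith [ht.1]
        _ = _ := by ring
    have h5 : cos t ^ 2 = 1 - sin t ^ 2 := cos_sq' t
    rw [U_zero, U, show 2 * (b + 1) = 2 * b + 2 by ring]
    have hs : 0 ≤ sin t ^ (2 * k) := by rw [pow_mul]; positivity
    calc (π - 2 * t) ^ (2 * b + 2) / ((2 * b + 2)! : ℝ) * sin t ^ (2 * k)
        ≤ π ^ (2 * b + 2) * cos t ^ 2 / ((2 * b + 2)! : ℝ) * sin t ^ (2 * k) := by gcongr
      _ = _ := by rw [h5]; ring
  have hU := continuous_U
  have hI := integral_mono_on (a := 0) (b := π / 2) (μ := MeasureTheory.volume) (by positivity)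
    (Continuous.intervalIntegrable (by fun_prop) _ _)
    (Continuous.intervalIntegrable (by fun_prop) _ _) hbound
  rw [integral_const_mul, integral_sub (Continuous.intervalIntegrable (by fun_prop) _ _)
    (Continuous.intervalIntegrable (by fun_prop) _ _)] at hI
  have h0 := T_zero_left k
  have h1 := T_zero_left (k + 1)
  have hv := v_succ k
  simp only [T, mul_zero] at h0 h1 ⊢
  set A := ∫ t in (0 : ℝ)..(π / 2), U 0 t * sin t ^ (2 * k)
  set B := ∫ t in (0 : ℝ)..(π / 2), U 0 t * sin t ^ (2 * (k + 1))
  have hB : 2 / π * v k * (A - B) = 1 / (2 * k + 2) := by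
    have hk : (2 * (k : ℝ) + 2) ≠ 0 := by positivity
    rw [eq_div_iff hk]
    linear_combination (2 * (k : ℝ) + 2) * h0 - (2 * k + 1) * h1 + 2 / π * B * hv
  calc _ ≤ 2 / π * v k * (π ^ (2 * b + 2) / ((2 * b + 2)! : ℝ) * (A - B)) := by
        have := v_pos k
        gcongr
    _ = _ := by rw [← hB]; ring

theorem tendsto_T (b : ℕ) : Tendsto (T (b + 1)) atTop (𝓝 0) := by
  refine squeeze_zero (T_nonneg _) (T_one_bound b) ?_
  rw [← mul_zero (π ^ (2 * b + 2) / ((2 * b + 2)! : ℝ))]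
  refine Tendsto.const_mul _ ?_
  refine Tendsto.congr' ?_ ((tendsto_one_div_add_atTop_nhds_zero_nat (𝕜 := ℝ)).const_mul (1 / 2)
    |>.trans (by simp))
  refine Eventually.of_forall fun k => ?_
  field_simp

theorem mzvTail_replicate_two (b n : ℕ) :
    mzvTail (List.replicate b 2) n = ENNReal.ofReal (T b n) := by
  induction b generalizing n with
  | zero => simp [mzvTail, T_zero_left]
  | succ b ih =>
    rw [List.replicate_succ, mzvTail]
    have hs : HasSum (fun j : ℕ => T b (n + j + 1) / ((n + j + 1 : ℕ) : ℝ) ^ 2)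
        (T (b + 1) n) := by
      rw [hasSum_iff_tendsto_nat_of_nonneg (fun j => div_nonneg (T_nonneg _ _) (by positivity))]
      have h1 : ∀ N, ∑ j ∈ Finset.range N, T b (n + j + 1) / ((n + j + 1 : ℕ) : ℝ) ^ 2 =
          T (b + 1) n - T (b + 1) (n + N) := by
        intro N
        have h := Finset.sum_range_sub' (fun j => T (b + 1) (n + j)) N
        rw [add_zero] at h
        rw [← h]
        exact Finset.sum_congr rfl fun j _ => (T_sub_succ b (n + j)).symm
      simp only [h1]
      have h2 : Tendsto (fun N => T (b + 1) (n + N)) atTop (𝓝 0) :=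
        (tendsto_T b).comp (tendsto_atTop_mono (fun N => Nat.le_add_left N n) tendsto_id)
      simpa using h2.const_sub (T (b + 1) n)
    rw [← hs.tsum_eq, ENNReal.ofReal_tsum_of_nonneg
      (fun j => div_nonneg (T_nonneg _ _) (by positivity)) hs.summable]
    refine tsum_congr fun j => ?_
    rw [ih, ← ENNReal.ofReal_mul (by positivity)]
    congr 1
    ring

/-- The evaluation `ζ({2}^n) = π^{2n} / (2n+1)!`. -/
theorem mzv_replicate_two (n : ℕ) :
    mzv (List.replicate n 2) = π ^ (2 * n) / ((2 * n + 1)! : ℝ) := by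
  rw [mzv_eq_toReal, mzvTail_replicate_two, ENNReal.toReal_ofReal (T_nonneg _ _)]
  have h := integral_eq_sub_of_hasDerivAt (a := 0) (b := π / 2)
    (fun t _ => hasDerivAt_U (2 * n) t)
    (Continuous.intervalIntegrable ((continuous_U _).const_mul _) _ _)
  rw [integral_const_mul, U_pi_div_two] at h
  have h2 : T n 0 = 2 / π * ∫ t in (0 : ℝ)..(π / 2), U (2 * n) t := by simp [T, v_zero]
  have h3 : ∫ t in (0 : ℝ)..(π / 2), U (2 * n) t = U (2 * n + 1) 0 / 2 := by linarith
  rw [h2, h3, U]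
  field_simp
  ring

/-! ### Heads and the arcsine power series -/

/-- The partial sum of the power series of `(2 arcsin x)^{2a+2} / (2a+2)!` at `x = sin t`. -/
noncomputable def Y (a N : ℕ) (t : ℝ) : ℝ :=
  ∑ k ∈ Finset.range N, head a k * (v (k + 1) / ((k + 1 : ℕ) : ℝ) ^ 2 * sin t ^ (2 * k + 2))

/-- The derivative of `Y a N`. -/
noncomputable def Y' (a N : ℕ) (t : ℝ) : ℝ :=
  ∑ k ∈ Finset.range N, head a k * (v (k + 1) / ((k + 1 : ℕ) : ℝ) ^ 2 *
    ((2 * k + 2) * sin t ^ (2 * k + 1) * cos t))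

theorem Y_nonneg (a N : ℕ) (t : ℝ) : 0 ≤ Y a N t := by
  refine Finset.sum_nonneg fun k _ => mul_nonneg (head_nonneg _ _) ?_
  have := v_pos (k + 1)
  rw [show 2 * k + 2 = 2 * (k + 1) by ring, pow_mul]
  positivity

theorem hasDerivAt_Y (a N : ℕ) (t : ℝ) : HasDerivAt (Y a N) (Y' a N t) t := by
  refine HasDerivAt.fun_sum fun k _ => HasDerivAt.const_mul _ (HasDerivAt.const_mul _ ?_)
  refine ((hasDerivAt_sin t).pow (2 * k + 2)).congr_deriv ?_
  push_cast
  rfl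

theorem hasDerivAt_Y' (a N : ℕ) (t : ℝ) : HasDerivAt (Y' a N)
    (4 * ∑ k ∈ Finset.range N, head a k *
      (v k * sin t ^ (2 * k) - v (k + 1) * sin t ^ (2 * (k + 1)))) t := by
  rw [Finset.mul_sum]
  refine HasDerivAt.fun_sum fun k _ => ?_
  have h := ((((((hasDerivAt_sin t).pow (2 * k + 1)).const_mul (2 * (k : ℝ) + 2)).mul
    (hasDerivAt_cos t))).const_mul (v (k + 1) / ((k + 1 : ℕ) : ℝ) ^ 2)).const_mul (head a k)
  refine h.congr_deriv ?_
  have hv := v_succ k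
  have hk : ((k : ℝ) + 1) ≠ 0 := by positivity
  have hvk : v k = v (k + 1) * (2 * k + 1) / (2 * k + 2) := by
    rw [hv]; field_simp
  simp only [Nat.add_sub_cancel, Pi.pow_apply]
  rw [hvk]
  push_cast
  field_simp
  rw [show cos t ^ 2 = 1 - sin t ^ 2 from cos_sq' t]
  ring

theorem Y_zero_right (a N : ℕ) : Y a N 0 = 0 := by simp [Y]

theorem Y'_zero_right (a N : ℕ) : Y' a N 0 = 0 := by simp [Y']

theorem sum_telescope_zero (N : ℕ) (t : ℝ) :
    ∑ k ∈ Finset.range N, head 0 k *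
      (v k * sin t ^ (2 * k) - v (k + 1) * sin t ^ (2 * (k + 1))) =
    1 - head 0 N * (v N * sin t ^ (2 * N)) := by
  simp only [head, one_mul]
  rw [Finset.sum_range_sub' (fun k => v k * sin t ^ (2 * k))]
  simp [v_zero]

/-- Summation by parts: `y'' = 4 y` up to the boundary term at `N`, where the left `y` is
`Y (a + 1) N` and the right one is `Y a N`. -/
theorem sum_telescope_succ (a N : ℕ) (t : ℝ) :
    ∑ k ∈ Finset.range N, head (a + 1) k *
      (v k * sin t ^ (2 * k) - v (k + 1) * sin t ^ (2 * (k + 1))) =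
    Y a N t - head (a + 1) N * (v N * sin t ^ (2 * N)) := by
  induction N with
  | zero => simp [Y, head]
  | succ N ih =>
    have hY : Y a (N + 1) t = Y a N t +
      head a N * (v (N + 1) / ((N + 1 : ℕ) : ℝ) ^ 2 * sin t ^ (2 * N + 2)) := by
      simp only [Y, Finset.sum_range_succ]
    rw [Finset.sum_range_succ, ih, hY, head_succ_succ]
    ring

theorem head_bounded (a : ℕ) : ∃ B : ℝ, 0 ≤ B ∧ ∀ m, head a m ≤ B := by
  induction a with
  | zero => exact ⟨1, by norm_num, fun m => le_of_eq rfl⟩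
  | succ a ih =>
    obtain ⟨B, hB, h⟩ := ih
    have hs : Summable (fun k : ℕ => 1 / ((k + 1 : ℕ) : ℝ) ^ 2) :=
      (summable_nat_add_iff 1).2 (Real.summable_one_div_nat_pow.2 (by norm_num))
    refine ⟨B * ∑' k : ℕ, 1 / ((k + 1 : ℕ) : ℝ) ^ 2,
      mul_nonneg hB (tsum_nonneg fun k => by positivity), fun m => ?_⟩
    calc head (a + 1) m ≤ ∑ k ∈ Finset.range m, B * (1 / ((k + 1 : ℕ) : ℝ) ^ 2) := by
          refine Finset.sum_le_sum fun k _ => ?_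
          rw [mul_one_div]
          have := h k
          gcongr
      _ ≤ _ := by
          rw [← Finset.mul_sum]
          exact mul_le_mul_of_nonneg_left (hs.sum_le_tsum _ fun k _ => by positivity) hB

theorem nonneg_of_deriv_nonneg {f f' : ℝ → ℝ} (hf : ∀ t, HasDerivAt f (f' t) t) (h0 : f 0 = 0)
    {t₀ : ℝ} (h : ∀ t ∈ Set.Icc 0 t₀, 0 ≤ f' t) : ∀ t ∈ Set.Icc 0 t₀, 0 ≤ f t := by
  have hm : MonotoneOn f (Set.Icc 0 t₀) := by
    refine monotoneOn_of_deriv_nonneg (convex_Icc _ _)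
      (fun t _ => (hf t).continuousAt.continuousWithinAt)
      (fun t _ => (hf t).differentiableAt.differentiableWithinAt) fun t ht => ?_
    rw [(hf t).deriv]
    exact h t (interior_subset ht)
  intro t ht
  rw [← h0]
  exact hm ⟨le_rfl, ht.1.trans ht.2⟩ ht ht.1

/-- A function vanishing to second order at `0` is controlled by its second derivative. -/
theorem bound_of_second_deriv {f f' f'' : ℝ → ℝ} (hf : ∀ t, HasDerivAt f (f' t) t)
    (hf' : ∀ t, HasDerivAt f' (f'' t) t) (h0 : f 0 = 0) (h0' : f' 0 = 0) {t₀ M : ℝ}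
    (h : ∀ t ∈ Set.Icc 0 t₀, 0 ≤ f'' t) (hM : ∀ t ∈ Set.Icc 0 t₀, f'' t ≤ M) :
    ∀ t ∈ Set.Icc 0 t₀, 0 ≤ f t ∧ f t ≤ M * t ^ 2 / 2 := by
  have h1 := nonneg_of_deriv_nonneg hf' h0' h
  have h2 := nonneg_of_deriv_nonneg hf h0 h1
  have h3 := nonneg_of_deriv_nonneg (f := fun t => M * t - f' t) (f' := fun t => M * 1 - f'' t)
    (fun t => ((hasDerivAt_id t).const_mul M).sub (hf' t)) (by simp [h0'])
    (t₀ := t₀) (fun t ht => by linarith [hM t ht])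
  have h4 := nonneg_of_deriv_nonneg (f := fun t => M * (t ^ 2 / 2) - f t)
    (f' := fun t => M * t - f' t)
    (fun t => ((((hasDerivAt_pow 2 t).div_const 2).const_mul M).sub (hf t)).congr_deriv
      (by norm_num)) (by simp [h0]) h3
  exact fun t ht => ⟨h2 t ht, by linarith [h4 t ht]⟩

/-- The error `P_{2a+2} - Y a N` is nonnegative and small on `[0, t₀]`: its second derivative is
four times the error at level `a - 1` plus the boundary term `head a N * v N * sin^{2N}`, so this
follows by induction on `a`. -/
theorem P_sub_Y_bound (a : ℕ) {t₀ : ℝ} (ht₀ : t₀ ≤ π / 2) : ∃ B : ℝ, 0 ≤ B ∧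
    ∀ N, ∀ t ∈ Set.Icc 0 t₀, 0 ≤ P (2 * a + 2) t - Y a N t ∧
      P (2 * a + 2) t - Y a N t ≤ B * (v N * sin t₀ ^ (2 * N)) := by
  have hP : ∀ (j : ℕ) (t : ℝ), HasDerivAt (fun t => 2 * P (j + 1) t) (4 * P j t) t :=
    fun j t => ((hasDerivAt_P j t).const_mul 2).congr_deriv (by ring)
  have hsin : ∀ N, ∀ t ∈ Set.Icc 0 t₀, 0 ≤ v N * sin t ^ (2 * N) ∧
      v N * sin t ^ (2 * N) ≤ v N * sin t₀ ^ (2 * N) := by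
    intro N t ht
    have hv := v_pos N
    have h1 : 0 ≤ sin t := sin_nonneg_of_nonneg_of_le_pi ht.1 (by linarith [ht.2, pi_pos])
    have h2 : sin t ≤ sin t₀ :=
      sin_le_sin_of_le_of_le_pi_div_two (by linarith [ht.1, pi_pos]) ht₀ ht.2
    exact ⟨by positivity, by gcongr⟩
  -- A bound `K` for `d''` on `[0, t₀]` gives the bound `K t₀² / 2 ≤ 4 K` for `d`.
  have key : ∀ (d : ℝ → ℝ) (K : ℝ), 0 ≤ K → (∀ t ∈ Set.Icc 0 t₀, 0 ≤ d t ∧ d t ≤ K * t ^ 2 / 2) →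
      ∀ t ∈ Set.Icc 0 t₀, 0 ≤ d t ∧ d t ≤ 4 * K := by
    intro d K hK h t ht
    refine ⟨(h t ht).1, (h t ht).2.trans ?_⟩
    have : t ^ 2 ≤ 2 ^ 2 := pow_le_pow_left₀ ht.1 (by linarith [ht.2, pi_le_four]) 2
    nlinarith
  induction a with
  | zero =>
    refine ⟨16, by norm_num, fun N => ?_⟩
    have h := bound_of_second_deriv (f := fun t => P 2 t - Y 0 N t)
      (f' := fun t => 2 * P 1 t - Y' 0 N t)
      (fun t => (hasDerivAt_P 1 t).sub (hasDerivAt_Y 0 N t))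
      (fun t => (hP 0 t).sub (hasDerivAt_Y' 0 N t)) (by simp [P, Y_zero_right])
      (by simp [P, Y'_zero_right]) (t₀ := t₀) (M := 4 * (v N * sin t₀ ^ (2 * N)))
      (fun t ht => by
        rw [sum_telescope_zero, P_zero, head]
        linarith [(hsin N t ht).1])
      (fun t ht => by
        rw [sum_telescope_zero, P_zero, head]
        linarith [(hsin N t ht).2])
    intro t ht
    have hK := (hsin N t ht).1.trans (hsin N t ht).2
    have := key _ _ (by linarith) h t ht
    exact ⟨this.1, by linarith [this.2]⟩
  | succ a ih =>
    obtain ⟨B, hB, ih⟩ := ih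
    obtain ⟨C, hC, hhead⟩ := head_bounded (a + 1)
    refine ⟨16 * (B + C), by positivity, fun N => ?_⟩
    have h := bound_of_second_deriv (f := fun t => P (2 * a + 4) t - Y (a + 1) N t)
      (f' := fun t => 2 * P (2 * a + 3) t - Y' (a + 1) N t)
      (fun t => (hasDerivAt_P _ t).sub (hasDerivAt_Y (a + 1) N t))
      (fun t => (hP _ t).sub (hasDerivAt_Y' (a + 1) N t)) (by simp [P, Y_zero_right])
      (by simp [P, Y'_zero_right]) (t₀ := t₀) (M := 4 * ((B + C) * (v N * sin t₀ ^ (2 * N))))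
      (fun t ht => by
        rw [sum_telescope_succ]
        have h1 := (ih N t ht).1
        have h2 := mul_nonneg (head_nonneg (a + 1) N) (hsin N t ht).1
        linarith)
      (fun t ht => by
        rw [sum_telescope_succ]
        have h1 := (ih N t ht).2
        have h2 := mul_le_mul (hhead N) (hsin N t ht).2 (hsin N t ht).1 hC
        linarith)
    intro t ht
    have hK := (hsin N t ht).1.trans (hsin N t ht).2
    have := key _ _ (by positivity) h t ht
    rw [show 2 * (a + 1) + 2 = 2 * a + 4 by ring]
    exact ⟨this.1, by linarith [this.2]⟩

theorem Y_le_P (a N : ℕ) {t : ℝ} (ht : t ∈ Set.Icc 0 (π / 2)) : Y a N t ≤ P (2 * a + 2) t := by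
  obtain ⟨B, -, h⟩ := P_sub_Y_bound a le_rfl
  linarith [(h N t ht).1]

theorem tendsto_Y (a : ℕ) {t : ℝ} (h0 : 0 ≤ t) (h1 : t < π / 2) :
    Tendsto (fun N => Y a N t) atTop (𝓝 (P (2 * a + 2) t)) := by
  obtain ⟨B, hB, h⟩ := P_sub_Y_bound a h1.le
  have hs0 : 0 ≤ sin t := sin_nonneg_of_nonneg_of_le_pi h0 (by linarith [pi_pos])
  have hs1 : sin t < 1 := by
    rw [← sin_pi_div_two]
    exact sin_lt_sin_of_lt_of_le_pi_div_two (by linarith [pi_pos]) le_rfl h1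
  have hr : sin t ^ 2 < 1 := by nlinarith
  have hlim : Tendsto (fun N : ℕ => B * ((2 * N + 1) * (sin t ^ 2) ^ N)) atTop (𝓝 0) := by
    have e1 := tendsto_self_mul_const_pow_of_lt_one (sq_nonneg (sin t)) hr
    have e2 := tendsto_pow_atTop_nhds_zero_of_lt_one (sq_nonneg (sin t)) hr
    have e3 := ((e1.const_mul 2).add e2).const_mul B
    simp only [mul_zero, add_zero] at e3
    refine e3.congr fun N => by ring
  have h2 : Tendsto (fun N => P (2 * a + 2) t - Y a N t) atTop (𝓝 0) := by
    refine squeeze_zero (fun N => (h N t ⟨h0, le_rfl⟩).1)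
      (fun N => (h N t ⟨h0, le_rfl⟩).2.trans ?_) hlim
    rw [pow_mul]
    have := v_le N
    gcongr
  have h3 := h2.const_sub (P (2 * a + 2) t)
  simpa using h3

/-- One integration by parts of `T b (k + 1)`, which raises `U_{2b}` to `U_{2b+1}` and absorbs
the extra factor `1 / (k + 1)` coming from the entry `3`. -/
theorem T_div (b k : ℕ) : T b (k + 1) / ((k + 1 : ℕ) : ℝ) = 2 / π * v (k + 1) *
    ∫ t in (0 : ℝ)..(π / 2), sin t ^ (2 * k + 1) * cos t * U (2 * b + 1) t := by
  have hU := continuous_U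
  have hI := integral_eq_sub_of_hasDerivAt (a := 0) (b := π / 2)
    (f := fun t => sin t ^ (2 * k + 2) * U (2 * b + 1) t)
    (f' := fun t => (2 * k + 2) * (sin t ^ (2 * k + 1) * cos t * U (2 * b + 1) t) -
      2 * (U (2 * b) t * sin t ^ (2 * (k + 1))))
    (fun t _ => (((hasDerivAt_sin t).pow (2 * k + 2)).mul (hasDerivAt_U (2 * b) t)).congr_deriv (by
      simp only [Pi.pow_apply, show 2 * k + 2 - 1 = 2 * k + 1 by omega]
      push_cast
      ring)) (Continuous.intervalIntegrable (by fun_prop) _ _)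
  rw [integral_sub (Continuous.intervalIntegrable (by fun_prop) _ _)
    (Continuous.intervalIntegrable (by fun_prop) _ _), integral_const_mul, integral_const_mul,
    U_pi_div_two] at hI
  simp only [sin_zero, mul_zero, zero_pow (show 2 * k + 2 ≠ 0 by omega), zero_mul, sub_zero] at hI
  rw [T, div_eq_iff (by positivity)]
  push_cast
  linear_combination (-(1 / π) * v (k + 1)) * hI

/-- The integrand whose integral over `[0, π/2]` is `(π/2) H(a,b)`. -/
noncomputable def L (a b : ℕ) (t : ℝ) : ℝ :=
  P (2 * a + 2) t * (cos t / sin t) * U (2 * b + 1) t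

theorem measurable_L (a b : ℕ) : Measurable (L a b) := by
  have h1 := (continuous_P (2 * a + 2)).measurable
  have h2 := (continuous_U (2 * b + 1)).measurable
  exact (h1.mul (measurable_cos.div measurable_sin)).mul h2

theorem P_div_sin_le (j : ℕ) {t : ℝ} (ht : t ∈ Set.Icc 0 (π / 2)) :
    P (j + 1) t / sin t ≤ π * P j t := by
  have hs := mul_le_sin ht.1 ht.2
  have hpi := pi_pos
  have hs0 : 0 ≤ sin t := sin_nonneg_of_nonneg_of_le_pi ht.1 (by linarith [ht.2])
  refine div_le_of_le_mul₀ hs0 (mul_nonneg hpi.le (P_nonneg j ht.1)) ?_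
  have h1 : 2 * t ≤ π * sin t := by
    calc 2 * t = π * (2 / π * t) := by field_simp
      _ ≤ _ := by gcongr
  have h2 : P (j + 1) t = P j t * (2 * t) / (j + 1 : ℕ) := by
    simp only [P, Nat.factorial_succ]
    push_cast
    field_simp
    ring
  have h3 : 0 ≤ P j t * (2 * t) := mul_nonneg (P_nonneg j ht.1) (by linarith [ht.1])
  calc P (j + 1) t ≤ P j t * (2 * t) := by
        rw [h2]
        exact div_le_self h3 (by exact_mod_cast Nat.succ_pos j)
    _ ≤ P j t * (π * sin t) := mul_le_mul_of_nonneg_left h1 (P_nonneg j ht.1)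
    _ = _ := by ring

theorem hasSum_integral (a b : ℕ) :
    HasSum (fun k : ℕ => head a k / ((k + 1 : ℕ) : ℝ) ^ 3 * T b (k + 1))
      (2 / π * ∫ t in (0 : ℝ)..(π / 2), L a b t) := by
  have hU := continuous_U
  have hP := continuous_P
  rw [hasSum_iff_tendsto_nat_of_nonneg (fun k => mul_nonneg (div_nonneg (head_nonneg _ _)
    (by positivity)) (T_nonneg _ _))]
  have hsum : ∀ N, ∑ k ∈ Finset.range N, head a k / ((k + 1 : ℕ) : ℝ) ^ 3 * T b (k + 1) =
      2 / π * ∫ t in (0 : ℝ)..(π / 2), Y a N t * (cos t / sin t) * U (2 * b + 1) t := by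
    intro N
    have h1 : ∀ t, Y a N t * (cos t / sin t) * U (2 * b + 1) t =
        ∑ k ∈ Finset.range N, head a k * (v (k + 1) / ((k + 1 : ℕ) : ℝ) ^ 2) *
          (sin t ^ (2 * k + 1) * cos t * U (2 * b + 1) t) := by
      intro t
      simp only [Y, Finset.sum_mul]
      refine Finset.sum_congr rfl fun k _ => ?_
      rcases eq_or_ne (sin t) 0 with h | h
      -- `sin t = 0`: division by zero makes both sides vanish.
      · simp [h]
      · field_simp
        ring
    simp only [h1]
    rw [integral_finsetSum (fun k _ => Continuous.intervalIntegrable (by fun_prop) _ _),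
      Finset.mul_sum]
    refine Finset.sum_congr rfl fun k _ => ?_
    have h2 := T_div b k
    have hk : ((k + 1 : ℕ) : ℝ) ≠ 0 := by positivity
    rw [integral_const_mul]
    calc _ = head a k / ((k + 1 : ℕ) : ℝ) ^ 2 * (T b (k + 1) / ((k + 1 : ℕ) : ℝ)) := by
          field_simp
      _ = _ := by rw [h2]; ring
  simp only [hsum]
  refine Tendsto.const_mul _ ?_
  -- Dominated convergence: `Y ≤ P_{2a+2}` on the interval and `P_{2a+2} / sin ≤ π P_{2a+1}`.
  refine tendsto_integral_filter_of_dominated_convergence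
    (fun t => π * P (2 * a + 1) t * U (2 * b + 1) t) ?_ ?_ ?_ ?_
  · refine Eventually.of_forall fun N => Measurable.aestronglyMeasurable ?_
    have hY : Continuous (Y a N) :=
      continuous_iff_continuousAt.2 fun t => (hasDerivAt_Y a N t).continuousAt
    exact (hY.measurable.mul (measurable_cos.div measurable_sin)).mul (hU _).measurable
  · refine Eventually.of_forall fun N => Eventually.of_forall fun t ht => ?_
    rw [Set.uIoc_of_le (by positivity)] at ht
    have ht' : t ∈ Set.Icc 0 (π / 2) := ⟨ht.1.le, ht.2⟩
    have hs0 : 0 ≤ sin t := sin_nonneg_of_nonneg_of_le_pi ht'.1 (by linarith [ht.2, pi_pos])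
    have hc0 : 0 ≤ cos t := cos_nonneg_of_mem_Icc ⟨by linarith [ht.1, pi_pos], ht.2⟩
    have hY0 := Y_nonneg a N t
    have hU0 := U_nonneg (2 * b + 1) ht.2
    have hP0 := P_nonneg (2 * a + 2) ht'.1
    rw [norm_of_nonneg (by positivity)]
    refine mul_le_mul_of_nonneg_right ?_ hU0
    calc Y a N t * (cos t / sin t) ≤ P (2 * a + 2) t * (1 / sin t) := by
          have := Y_le_P a N ht'
          have := cos_le_one t
          gcongr
      _ = P (2 * a + 2) t / sin t := by ring
      _ ≤ _ := P_div_sin_le _ ht'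
  · exact Continuous.intervalIntegrable (by fun_prop) _ _
  · have hne : ∀ᵐ t : ℝ, t ≠ π / 2 := by
      simp [MeasureTheory.ae_iff]
    filter_upwards [hne] with t htne ht
    rw [Set.uIoc_of_le (by positivity)] at ht
    exact ((tendsto_Y a ht.1.le (lt_of_le_of_ne ht.2 htne)).mul_const _).mul_const _

/-- `H(a,b) = (2/π) ∫₀^{π/2} (2t)^{2a+2}/(2a+2)! · cot t · (π-2t)^{2b+1}/(2b+1)! dt`. -/
theorem H_eq_integral (a b : ℕ) : H a b = 2 / π * ∫ t in (0 : ℝ)..(π / 2), L a b t := by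
  have hs := hasSum_integral a b
  rw [H, mzv_eq_toReal, mzvTail_replicate_append, ← hs.tsum_eq]
  have h1 : ∀ k : ℕ, ENNReal.ofReal (head a k / ((k + 1 : ℕ) : ℝ) ^ 3) *
      mzvTail (List.replicate b 2) (k + 1) =
      ENNReal.ofReal (head a k / ((k + 1 : ℕ) : ℝ) ^ 3 * T b (k + 1)) := fun k => by
    rw [mzvTail_replicate_two, ← ENNReal.ofReal_mul (div_nonneg (head_nonneg _ _) (by positivity))]
  have h0 : ∀ k : ℕ, 0 ≤ head a k / ((k + 1 : ℕ) : ℝ) ^ 3 * T b (k + 1) := fun k =>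
    mul_nonneg (div_nonneg (head_nonneg _ _) (by positivity)) (T_nonneg _ _)
  simp only [h1]
  rw [← ENNReal.ofReal_tsum_of_nonneg h0 hs.summable, ENNReal.toReal_ofReal (tsum_nonneg h0)]

/-! ### Fourier expansion against polynomials -/

open Polynomial in
/-- The polynomial `x^i / i!`. -/
noncomputable def polyP (i : ℕ) : ℝ[X] := Polynomial.C (1 / (i ! : ℝ)) * X ^ i

open Polynomial in
/-- The polynomial `(π - x)^j / j!`. -/
noncomputable def polyU (j : ℕ) : ℝ[X] :=
  Polynomial.C (1 / (j ! : ℝ)) * (Polynomial.C π - X) ^ j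

section Poly

open Polynomial

theorem derivative_polyP (i : ℕ) : derivative (polyP (i + 1)) = polyP i := by
  have : (1 / ((i + 1)! : ℝ)) * (i + 1 : ℕ) = 1 / (i ! : ℝ) := by
    rw [Nat.factorial_succ]; push_cast; field_simp
  rw [polyP, derivative_C_mul, derivative_X_pow, Nat.add_sub_cancel, ← mul_assoc,
    ← Polynomial.C_mul, this, polyP]

theorem derivative_polyU (j : ℕ) : derivative (polyU (j + 1)) = -polyU j := by
  have : (1 / ((j + 1)! : ℝ)) * (j + 1 : ℕ) = 1 / (j ! : ℝ) := by
    rw [Nat.factorial_succ]; push_cast; field_simp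
  rw [polyU, derivative_C_mul, derivative_pow, Nat.add_sub_cancel, ← mul_assoc, ← mul_assoc,
    ← Polynomial.C_mul, this, polyU]
  simp

theorem iterate_derivative_polyP (s r : ℕ) : derivative^[s] (polyP (s + r)) = polyP r := by
  induction s with
  | zero => simp
  | succ s ih =>
    rw [Function.iterate_succ_apply, show s + 1 + r = s + r + 1 by ring, derivative_polyP, ih]

theorem iterate_derivative_polyU (s r : ℕ) :
    derivative^[s] (polyU (s + r)) = (-1) ^ s * polyU r := by
  induction s with
  | zero => simp
  | succ s ih =>
    rw [Function.iterate_succ_apply, show s + 1 + r = s + r + 1 by ring, derivative_polyU,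
      iterate_derivative_neg, ih]
    ring

theorem iterate_derivative_polyP_of_lt {s i : ℕ} (h : i < s) : derivative^[s] (polyP i) = 0 :=
  iterate_derivative_eq_zero (lt_of_le_of_lt (natDegree_C_mul_X_pow_le _ _) h)

theorem natDegree_polyU_le (j : ℕ) : (polyU j).natDegree ≤ j := by
  have h1 : (Polynomial.C π - X : ℝ[X]).natDegree ≤ 1 :=
    (natDegree_sub_le _ _).trans (by simp)
  exact (natDegree_C_mul_le _ _).trans ((natDegree_pow_le_of_le j h1).trans (by simp))

theorem iterate_derivative_polyU_of_lt {s j : ℕ} (h : j < s) : derivative^[s] (polyU j) = 0 :=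
  iterate_derivative_eq_zero (lt_of_le_of_lt (natDegree_polyU_le j) h)

theorem eval_zero_iterate_polyP {s i : ℕ} (h : s ≠ i) : (derivative^[s] (polyP i)).eval 0 = 0 := by
  rcases lt_or_gt_of_ne h with h | h
  · obtain ⟨r, rfl⟩ := Nat.exists_eq_add_of_lt h
    rw [add_assoc, iterate_derivative_polyP]
    simp [polyP]
  · simp [iterate_derivative_polyP_of_lt h]

theorem eval_pi_iterate_polyU {s j : ℕ} (h : s ≠ j) : (derivative^[s] (polyU j)).eval π = 0 := by
  rcases lt_or_gt_of_ne h with h | h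
  · obtain ⟨r, rfl⟩ := Nat.exists_eq_add_of_lt h
    rw [add_assoc, iterate_derivative_polyU]
    simp [polyU]
  · simp [iterate_derivative_polyU_of_lt h]

/-- Only one term of Leibniz' rule survives at `0`. -/
theorem eval_zero_iterate_mul {i j m r : ℕ} (h : i + j = m + r) :
    (derivative^[m] (polyP i * polyU j)).eval 0 =
      (m.choose i : ℝ) * (-1) ^ (m - i) * (π ^ r / (r ! : ℝ)) := by
  rw [iterate_derivative_mul, eval_finsetSum]
  rcases lt_or_ge m i with hm | hm
  · rw [Nat.choose_eq_zero_of_lt hm]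
    simp only [Nat.cast_zero, zero_mul]
    refine Finset.sum_eq_zero fun l _ => ?_
    simp [eval_zero_iterate_polyP (show m - l ≠ i by omega)]
  · obtain ⟨s, rfl⟩ := Nat.exists_eq_add_of_le hm
    obtain rfl : j = s + r := by omega
    rw [Finset.sum_eq_single s]
    · have h1 : derivative^[i + s - s] (polyP i) = polyP 0 := by
        rw [Nat.add_sub_cancel]; exact iterate_derivative_polyP i 0
      rw [h1, iterate_derivative_polyU, Nat.add_sub_cancel_left, Nat.choose_symm_add]
      simp [polyP, polyU]
      ring
    · intro l hl hls
      have : l ≤ i + s := by simpa [Nat.lt_succ_iff] using hl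
      simp [eval_zero_iterate_polyP (show i + s - l ≠ i by omega)]
    · intro hs
      simp at hs

/-- Only one term of Leibniz' rule survives at `π`. -/
theorem eval_pi_iterate_mul {i j m r : ℕ} (h : i + j = m + r) :
    (derivative^[m] (polyP i * polyU j)).eval π =
      (m.choose j : ℝ) * (-1) ^ j * (π ^ r / (r ! : ℝ)) := by
  rw [iterate_derivative_mul, eval_finsetSum]
  rcases lt_or_ge m j with hm | hm
  · rw [Nat.choose_eq_zero_of_lt hm]
    simp only [Nat.cast_zero, zero_mul]
    refine Finset.sum_eq_zero fun l hl => ?_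
    have : l ≤ m := by simpa [Nat.lt_succ_iff] using hl
    simp [eval_pi_iterate_polyU (show l ≠ j by omega)]
  · obtain ⟨s, rfl⟩ := Nat.exists_eq_add_of_le hm
    obtain rfl : i = s + r := by omega
    rw [Finset.sum_eq_single j]
    · have h1 : derivative^[j] (polyU j) = (-1) ^ j * polyU 0 := iterate_derivative_polyU j 0
      rw [h1, Nat.add_sub_cancel_left, iterate_derivative_polyP]
      simp [polyP, polyU]
      ring
    · intro l hl hls
      simp [eval_pi_iterate_polyU hls]
    · intro hs
      simp at hs

/-- Repeated integration by parts of a polynomial against `sin (n x)`. -/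
theorem integral_poly_sin (f : ℝ[X]) (n : ℕ) (hn : n ≠ 0) (M : ℕ) :
    ∫ x in (0 : ℝ)..π, f.eval x * sin (n * x) =
      ∑ k ∈ Finset.range M, (-1) ^ k * ((derivative^[2 * k] f).eval 0 -
        (-1) ^ n * (derivative^[2 * k] f).eval π) / (n : ℝ) ^ (2 * k + 1) +
      (-1) ^ M / (n : ℝ) ^ (2 * M) *
        ∫ x in (0 : ℝ)..π, (derivative^[2 * M] f).eval x * sin (n * x) := by
  have hn' : (n : ℝ) ≠ 0 := by exact_mod_cast hn
  have step : ∀ g : ℝ[X], ∫ x in (0 : ℝ)..π, g.eval x * sin (n * x) =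
      (g.eval 0 - (-1) ^ n * g.eval π) / n -
        1 / (n : ℝ) ^ 2 * ∫ x in (0 : ℝ)..π, (derivative (derivative g)).eval x * sin (n * x) := by
    intro g
    have hd : ∀ x : ℝ, HasDerivAt
        (fun x => (derivative g).eval x * sin (n * x) / (n : ℝ) ^ 2 - g.eval x * cos (n * x) / n)
        (g.eval x * sin (n * x) +
          1 / (n : ℝ) ^ 2 * ((derivative (derivative g)).eval x * sin (n * x))) x := by
      intro x
      have hlin : HasDerivAt (fun x : ℝ => (n : ℝ) * x) n x := by
        simpa using (hasDerivAt_id x).const_mul (n : ℝ)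
      have h1 := (((derivative g).hasDerivAt x).mul hlin.sin).div_const ((n : ℝ) ^ 2)
      have h2 := ((g.hasDerivAt x).mul hlin.cos).div_const (n : ℝ)
      refine (h1.sub h2).congr_deriv ?_
      field_simp
      ring
    have hI := integral_eq_sub_of_hasDerivAt (a := 0) (b := π) (fun x _ => hd x)
      (Continuous.intervalIntegrable (by fun_prop) _ _)
    rw [integral_add (Continuous.intervalIntegrable (by fun_prop) _ _)
      (Continuous.intervalIntegrable (by fun_prop) _ _), integral_const_mul] at hI
    simp only [sin_nat_mul_pi, cos_nat_mul_pi, mul_zero, sin_zero, cos_zero] at hI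
    linear_combination hI
  induction M with
  | zero => simp
  | succ M ih =>
    rw [ih, Finset.sum_range_succ, step (derivative^[2 * M] f)]
    rw [← Function.iterate_succ_apply' derivative, ← Function.iterate_succ_apply' derivative,
      show (2 * M).succ.succ = 2 * (M + 1) by omega]
    field_simp
    ring

end Poly

/-- The expansion `cot t = 2 ∑ sin 2nt` with its remainder after `N` terms. -/
theorem cot_eq_sum (N : ℕ) {t : ℝ} (h : sin t ≠ 0) :
    cos t / sin t = 2 * (∑ n ∈ Finset.range N, sin (2 * ((n + 1 : ℕ) * t))) +
      cos ((2 * N + 1) * t) / sin t := by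
  induction N with
  | zero => simp
  | succ N ih =>
    rw [ih, Finset.sum_range_succ]
    have h1 : cos ((2 * N + 1) * t) = cos (2 * ((N + 1 : ℕ) * t)) * cos t +
        sin (2 * ((N + 1 : ℕ) * t)) * sin t := by
      rw [← cos_sub]; congr 1; push_cast; ring
    have h2 : cos ((2 * (N + 1 : ℕ) + 1) * t) = cos (2 * ((N + 1 : ℕ) * t)) * cos t -
        sin (2 * ((N + 1 : ℕ) * t)) * sin t := by
      rw [← cos_add]; congr 1; ring
    rw [h1, h2, mul_add, sub_div, add_div, mul_div_cancel_right₀ _ h]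
    ring

/-- The Riemann–Lebesgue lemma on `[0, π/2]` along the frequencies `2N + 1`. -/
theorem tendsto_integral_mul_cos (q : ℝ → ℝ)
    (hq : IntervalIntegrable q MeasureTheory.volume 0 (π / 2)) :
    Tendsto (fun N : ℕ => ∫ t in (0 : ℝ)..(π / 2), q t * cos ((2 * N + 1) * t)) atTop (𝓝 0) := by
  have hpi : (0 : ℝ) ≤ π / 2 := by positivity
  have hw : Tendsto (fun N : ℕ => (2 * (N : ℝ) + 1) / (2 * π)) atTop (cocompact ℝ) := by
    refine Tendsto.mono_right ?_ atTop_le_cocompact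
    refine Tendsto.atTop_div_const (by positivity) (tendsto_atTop_add_const_right _ _ ?_)
    exact tendsto_natCast_atTop_atTop.const_mul_atTop (by norm_num)
  set f : ℝ → ℂ := (Set.Ioc 0 (π / 2)).indicator (fun t => (q t : ℂ)) with hf
  have hfi : MeasureTheory.Integrable f := by
    rw [hf, MeasureTheory.integrable_indicator_iff measurableSet_Ioc]
    exact ((intervalIntegrable_iff_integrableOn_Ioc_of_le hpi).1 hq).ofReal
  have h1 := (Real.tendsto_integral_exp_smul_cocompact f).comp hw
  have h2 := (Complex.continuous_re.tendsto 0).comp h1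
  rw [Complex.zero_re] at h2
  refine h2.congr fun N => ?_
  have hint : MeasureTheory.Integrable (fun t : ℝ =>
      Real.fourierChar (-(t * ((2 * (N : ℝ) + 1) / (2 * π)))) • f t) := by
    have := (Real.fourierIntegral_convergent_iff (μ := MeasureTheory.volume) (f := f)
      ((2 * (N : ℝ) + 1) / (2 * π))).2 hfi
    refine this.congr (Eventually.of_forall fun t => ?_)
    simp [mul_comm]
  simp only [Function.comp]
  rw [integral_of_le hpi, ← MeasureTheory.integral_indicator measurableSet_Ioc]
  refine (Complex.reCLM.integral_comp_comm hint).symm.trans ?_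
  congr 1
  ext t
  simp only [hf, Set.indicator]
  split_ifs with ht
  · rw [Circle.smul_def, Real.fourierChar_apply]
    have : (((2 * π * -(t * ((2 * (N : ℝ) + 1) / (2 * π))) : ℝ) : ℂ) * Complex.I) =
        ((-((2 * N + 1) * t) : ℝ) : ℂ) * Complex.I := by
      congr 2
      field_simp
    rw [this, Complex.reCLM_apply, smul_eq_mul, Complex.re_mul_ofReal, Complex.exp_ofReal_mul_I_re,
      cos_neg, mul_comm]
  · simp

/-- `∑ (-1)^n / n^s = -(1 - 2^{1-s}) ζ(s)`: adding `ζ(s)` to the left-hand side doubles the even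
terms and cancels the odd ones. -/
theorem hasSum_alternating {s : ℕ} (hs : 1 < s) :
    HasSum (fun n : ℕ => (-1 : ℝ) ^ (n + 1) / ((n + 1 : ℕ) : ℝ) ^ s)
      (-(1 - 2 / 2 ^ s) * ∑' n : ℕ, 1 / ((n + 1 : ℕ) : ℝ) ^ s) := by
  have hZ : HasSum (fun n : ℕ => 1 / ((n + 1 : ℕ) : ℝ) ^ s)
      (∑' n : ℕ, 1 / ((n + 1 : ℕ) : ℝ) ^ s) :=
    ((summable_nat_add_iff 1).2 (Real.summable_one_div_nat_pow.2 hs)).hasSum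
  have h1 : HasSum (fun n : ℕ => (1 + (-1 : ℝ) ^ (n + 1)) / ((n + 1 : ℕ) : ℝ) ^ s)
      (0 + 2 / 2 ^ s * ∑' n : ℕ, 1 / ((n + 1 : ℕ) : ℝ) ^ s) := by
    refine HasSum.even_add_odd ?_ ?_
    · refine hasSum_zero.congr_fun ?_
      intro m
      simp [pow_succ, pow_mul]
    · refine (hZ.mul_left (2 / 2 ^ s)).congr_fun ?_
      intro m
      have : (2 * m + 1 + 1 : ℕ) = 2 * (m + 1) := by ring
      rw [this, pow_mul]
      push_cast
      rw [mul_pow]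
      norm_num
      field_simp
  have h2 := h1.sub hZ
  have hval : ∀ c Z : ℝ, -(1 - c) * Z = 0 + c * Z - Z := fun c Z => by ring
  rw [hval]
  exact h2.congr_fun fun n => by ring

/-! ### The sine coefficients and their sum -/

/-- The Fourier sine coefficients of `P_{2a+2} U_{2b+1}`. -/
theorem sine_coeff (a b n : ℕ) : 2 * ∫ t in (0 : ℝ)..(π / 2),
      P (2 * a + 2) t * U (2 * b + 1) t * sin (2 * ((n + 1 : ℕ) * t)) =
    ∑ k ∈ Finset.Icc 1 (a + b + 1), (-1) ^ k *
      (π ^ (2 * (a + b + 1 - k) + 1) / ((2 * (a + b + 1 - k) + 1)! : ℝ)) *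
        ((Nat.choose (2 * k) (2 * a + 2) : ℝ) * (1 / ((n + 1 : ℕ) : ℝ) ^ (2 * k + 1)) +
          (Nat.choose (2 * k) (2 * b + 1) : ℝ) *
            ((-1) ^ (n + 1) / ((n + 1 : ℕ) : ℝ) ^ (2 * k + 1))) := by
  have h1 : ∀ t, P (2 * a + 2) t * U (2 * b + 1) t * sin (2 * ((n + 1 : ℕ) * t)) =
      (fun x => (polyP (2 * a + 2) * polyU (2 * b + 1)).eval x * sin ((n + 1 : ℕ) * x))
        (2 * t) := by
    intro t
    have : 2 * (((n + 1 : ℕ) : ℝ) * t) = ((n + 1 : ℕ) : ℝ) * (2 * t) := by ring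
    simp only [this, polyP, polyU, P, U, Polynomial.eval_mul, Polynomial.eval_C,
      Polynomial.eval_pow, Polynomial.eval_sub, Polynomial.eval_X]
    ring
  have h2 := integral_comp_mul_left (a := 0) (b := π / 2)
    (fun x => (polyP (2 * a + 2) * polyU (2 * b + 1)).eval x * sin ((n + 1 : ℕ) * x))
    (two_ne_zero (α := ℝ))
  rw [integral_congr (fun t _ => h1 t), h2, smul_eq_mul, mul_zero,
    mul_inv_cancel_left₀ two_ne_zero, mul_div_cancel₀ _ (two_ne_zero),
    integral_poly_sin _ (n + 1) (by omega) (a + b + 2)]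
  have hdeg : Polynomial.derivative^[2 * (a + b + 2)] (polyP (2 * a + 2) * polyU (2 * b + 1)) = 0 := by
    refine Polynomial.iterate_derivative_eq_zero (lt_of_le_of_lt
      (Polynomial.natDegree_mul_le_of_le (Polynomial.natDegree_C_mul_X_pow_le _ _)
        (natDegree_polyU_le _)) (by omega))
  simp only [hdeg, Polynomial.eval_zero, zero_mul, integral_zero, mul_zero, add_zero]
  symm
  have hsub : Finset.Icc 1 (a + b + 1) ⊆ Finset.range (a + b + 2) := fun k hk => by
    simp at hk ⊢; omega
  refine Eq.trans ?_ (Finset.sum_subset hsub ?_)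
  · refine Finset.sum_congr rfl fun k hk => ?_
    rw [Finset.mem_Icc] at hk
    have hr : 2 * a + 2 + (2 * b + 1) = 2 * k + (2 * (a + b + 1 - k) + 1) := by omega
    rw [eval_zero_iterate_mul hr, eval_pi_iterate_mul hr]
    have e1 : ((2 * k).choose (2 * a + 2) : ℝ) * (-1) ^ (2 * k - (2 * a + 2)) =
        (2 * k).choose (2 * a + 2) := by
      rw [show 2 * k - (2 * a + 2) = 2 * (k - (a + 1)) by omega, pow_mul]
      simp
    have e2 : (-1 : ℝ) ^ (2 * b + 1) = -1 := by simp [pow_succ, pow_mul]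
    rw [e1, e2]
    ring
  · intro k hk hk'
    have : k = 0 := by simp at hk hk'; omega
    subst this
    have hr : 2 * a + 2 + (2 * b + 1) = 2 * 0 + (2 * (a + b + 1 - 0) + 1) := by omega
    rw [eval_zero_iterate_mul hr, eval_pi_iterate_mul hr]
    simp

/-- `∫ L` is the sum of the sine coefficients: this is the Fourier expansion
`cot t = 2 ∑ sin 2nt`, made rigorous by the Riemann–Lebesgue lemma. -/
theorem tendsto_sine_coeff (a b : ℕ) :
    Tendsto (fun N : ℕ => ∑ n ∈ Finset.range N, 2 * ∫ t in (0 : ℝ)..(π / 2),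
      P (2 * a + 2) t * U (2 * b + 1) t * sin (2 * ((n + 1 : ℕ) * t))) atTop
      (𝓝 (∫ t in (0 : ℝ)..(π / 2), L a b t)) := by
  have hU := continuous_U
  have hP := continuous_P
  have hpi : (0 : ℝ) ≤ π / 2 := by positivity
  set q : ℝ → ℝ := fun t => P (2 * a + 2) t / sin t * U (2 * b + 1) t with hq
  have hqm : Measurable q := ((hP _).measurable.div measurable_sin).mul (hU _).measurable
  have hqi : IntervalIntegrable q MeasureTheory.volume 0 (π / 2) := by
    refine IntervalIntegrable.mono_fun' (g := fun t => π * P (2 * a + 1) t * U (2 * b + 1) t)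
      (Continuous.intervalIntegrable (by fun_prop) _ _) hqm.aestronglyMeasurable ?_
    refine (MeasureTheory.ae_restrict_iff' measurableSet_uIoc).2
      (Eventually.of_forall fun t ht => ?_)
    rw [Set.uIoc_of_le hpi] at ht
    have ht' : t ∈ Set.Icc 0 (π / 2) := ⟨ht.1.le, ht.2⟩
    have hs0 : 0 ≤ sin t := sin_nonneg_of_nonneg_of_le_pi ht'.1 (by linarith [ht.2, pi_pos])
    have hU0 := U_nonneg (2 * b + 1) ht.2
    have hP0 := P_nonneg (2 * a + 2) ht'.1
    change ‖P (2 * a + 2) t / sin t * U (2 * b + 1) t‖ ≤ _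
    rw [norm_of_nonneg (by positivity)]
    exact mul_le_mul_of_nonneg_right (P_div_sin_le _ ht') hU0
  have hRL := (tendsto_integral_mul_cos q hqi).const_sub (∫ t in (0 : ℝ)..(π / 2), L a b t)
  rw [sub_zero] at hRL
  refine hRL.congr fun N => ?_
  rw [sub_eq_iff_eq_add, ← Finset.mul_sum, ← integral_finsetSum
    (fun n _ => Continuous.intervalIntegrable (by fun_prop) _ _), ← integral_const_mul,
    ← integral_add (Continuous.intervalIntegrable (by fun_prop) _ _)
      (hqi.mul_continuousOn (Continuous.continuousOn (by fun_prop)))]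
  refine integral_congr_ae (Eventually.of_forall fun t ht => ?_)
  rw [Set.uIoc_of_le hpi] at ht
  have hs : sin t ≠ 0 := (sin_pos_of_pos_of_lt_pi ht.1 (by linarith [ht.2, pi_pos])).ne'
  rw [L, cot_eq_sum N hs, ← Finset.mul_sum]
  simp only [hq]
  ring

theorem H_eq_sum (a b : ℕ) : H a b = 2 * ∑ k ∈ Finset.Icc 1 (a + b + 1), (-1 : ℝ) ^ k *
      ((Nat.choose (2 * k) (2 * a + 2) : ℝ) -
        (1 - 1 / 2 ^ (2 * k)) * (Nat.choose (2 * k) (2 * b + 1) : ℝ)) *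
      (∑' n : ℕ, 1 / ((n + 1 : ℕ) : ℝ) ^ (2 * k + 1)) *
      mzv (List.replicate (a + b + 1 - k) 2) := by
  have hsum : HasSum (fun n : ℕ => 2 * ∫ t in (0 : ℝ)..(π / 2),
      P (2 * a + 2) t * U (2 * b + 1) t * sin (2 * ((n + 1 : ℕ) * t)))
      (∑ k ∈ Finset.Icc 1 (a + b + 1), (-1) ^ k *
        (π ^ (2 * (a + b + 1 - k) + 1) / ((2 * (a + b + 1 - k) + 1)! : ℝ)) *
        ((Nat.choose (2 * k) (2 * a + 2) : ℝ) * (∑' n : ℕ, 1 / ((n + 1 : ℕ) : ℝ) ^ (2 * k + 1)) +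
          (Nat.choose (2 * k) (2 * b + 1) : ℝ) * (-(1 - 2 / 2 ^ (2 * k + 1)) *
            ∑' n : ℕ, 1 / ((n + 1 : ℕ) : ℝ) ^ (2 * k + 1)))) := by
    simp only [sine_coeff]
    refine hasSum_sum fun k hk => ?_
    rw [Finset.mem_Icc] at hk
    have hs : 1 < 2 * k + 1 := by omega
    exact ((((summable_nat_add_iff 1).2 (Real.summable_one_div_nat_pow.2 hs)).hasSum.mul_left
      _).add ((hasSum_alternating hs).mul_left _)).mul_left _
  rw [H_eq_integral, tendsto_nhds_unique (tendsto_sine_coeff a b) hsum.tendsto_sum_nat,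
    Finset.mul_sum, Finset.mul_sum]
  refine Finset.sum_congr rfl fun k _ => ?_
  rw [mzv_replicate_two]
  have hpi := pi_ne_zero
  have h2 : (2 : ℝ) / 2 ^ (2 * k + 1) = 1 / 2 ^ (2 * k) := by
    rw [pow_succ]; field_simp
  rw [h2, pow_succ π]
  field_simp
  ring

end Zagier

/-- Zagier's formula: `H(a,b) = 2 ∑_{k=1}^{a+b+1} (-1)^k c_{a,b,k} ζ(2k+1) ζ({2}^{a+b+1-k})`
where `c_{a,b,k} = C(2k,2a+2) - (1 - 2^{-2k}) C(2k,2b+1)`. -/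
theorem zagier_formula (a b : ℕ) :
    (H a b : ℂ) = 2 * ∑ k ∈ Finset.Icc 1 (a + b + 1), (-1 : ℂ) ^ k *
      ((Nat.choose (2 * k) (2 * a + 2) : ℂ) -
        (1 - 1 / 2 ^ (2 * k)) * (Nat.choose (2 * k) (2 * b + 1) : ℂ)) *
      riemannZeta (2 * k + 1) * (mzv (List.replicate (a + b + 1 - k) 2) : ℂ) := by
  have hz : ∀ k ∈ Finset.Icc 1 (a + b + 1), riemannZeta (2 * k + 1) =
      ((∑' n : ℕ, 1 / ((n + 1 : ℕ) : ℝ) ^ (2 * k + 1) : ℝ) : ℂ) := by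
    intro k hk
    rw [Finset.mem_Icc] at hk
    have hs : 1 < 2 * k + 1 := by omega
    have h := zeta_nat_eq_tsum_of_gt_one hs
    push_cast at h ⊢
    rw [h, Summable.tsum_eq_zero_add]
    · simp
    · have h' := Complex.ofRealCLM.summable (Real.summable_one_div_nat_pow.2 hs)
      simpa using h'
  rw [Zagier.H_eq_sum]
  push_cast
  congr 1
  refine Finset.sum_congr rfl fun k hk => ?_
  rw [hz k hk]
  push_cast
  rfl
end

section
/- For all nonnegative integers a and b, ∫_0^{π/2} x^{2a+2} (1 - (2/π)x)^{2b+1} cot(x) dx = -(π^{2a+2} (2b+1)! / 2^{2a+1}) · Σ_{n=0}^{∞} ζ(2n) (2n+2a+1)! / (2^{2n} (2n+2a+2b+3)!), where ζ denotes the Riemann zeta function (with ζ(0) = -1/2 given by analytic continuation). -/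
open Real Finset

/-!
For `|x| < π` the cotangent satisfies `x cot x = -2 ∑ ζ(2n) (x / π) ^ (2n)`; the constant term is
`1` because `ζ(0) = -1/2`. On `[0, π/2]` the series is dominated by its (summable) values at
`x = π/2`, so it may be multiplied by `x ^ (2a+1) (1 - 2x/π) ^ (2b+1)` and integrated term by term.
After `x = (π/2) t` each term is a Beta integral
`∫₀¹ t ^ p (1 - t) ^ q dt = p! q! / (p + q + 1)!`.

The power series comes from the Mittag-Leffler expansion
`π cot (π z) - 1/z = ∑ (1/(z - m) + 1/(z + m))` (`cot_series_rep'`): for `0 < z < 1` each summand is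
expanded as a geometric series in `z² / m²`, and since all terms have the same sign the two
summations may be exchanged, which produces `∑ 1 / m ^ (2k) = ζ(2k)`.
-/

/-- The value `ζ(2n)` as a real number. -/
noncomputable def zetaEven (n : ℕ) : ℝ := (riemannZeta (2 * n)).re

lemma zetaEven_zero : zetaEven 0 = -1 / 2 := by
  simp [zetaEven, riemannZeta_zero]

lemma riemannZeta_two_mul_succ (k : ℕ) :
    riemannZeta (2 * (k + 1 : ℕ)) = ((∑' m : ℕ, 1 / ((m : ℝ) + 1) ^ (2 * (k + 1)) : ℝ) : ℂ) := by
  rw [zeta_eq_tsum_one_div_nat_add_one_cpow]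
  · push_cast
    refine tsum_congr fun m => ?_
    rw [show (2 * ((k : ℂ) + 1)) = ((2 * (k + 1) : ℕ) : ℂ) by push_cast; ring,
      Complex.cpow_natCast]
  · norm_cast
    omega

lemma zetaEven_succ (k : ℕ) :
    zetaEven (k + 1) = ∑' m : ℕ, 1 / ((m : ℝ) + 1) ^ (2 * (k + 1)) := by
  rw [zetaEven, riemannZeta_two_mul_succ, Complex.ofReal_re]

lemma ofReal_zetaEven (n : ℕ) : (zetaEven n : ℂ) = riemannZeta (2 * n) := by
  cases n with
  | zero => rw [zetaEven_zero]; simp [riemannZeta_zero]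
  | succ k => rw [zetaEven_succ, riemannZeta_two_mul_succ]

lemma hasSum_cot_partial_fractions {z : ℝ} (h0 : 0 < z) (h1 : z < 1) :
    HasSum (fun m : ℕ => z ^ 2 / (((m : ℝ) + 1) ^ 2 - z ^ 2))
      ((1 - π * z * Real.cot (π * z)) / 2) := by
  have hz : (z : ℂ) ∈ Complex.integerComplement := by
    rw [Complex.mem_integerComplement_iff]
    rintro ⟨n, hn⟩
    have hn' : (n : ℝ) = z := by exact_mod_cast hn
    have h2 : (0 : ℤ) < n := by exact_mod_cast hn' ▸ h0
    have h3 : n < (1 : ℤ) := by exact_mod_cast hn' ▸ h1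
    omega
  have hs : HasSum (fun n => cotTerm (z : ℂ) n) (π * Complex.cot (π * z) - 1 / z) := by
    have := (summable_cotTerm hz).hasSum
    rwa [show ∑' n, cotTerm (z : ℂ) n = π * Complex.cot (π * z) - 1 / z from
      (cot_series_rep' hz).symm] at this
  rw [← Complex.hasSum_ofReal]
  convert! hs.mul_left (-(z : ℂ) / 2) using 1
  · funext m
    rw [cotTerm_identity hz]
    push_cast
    have hne : ((m : ℝ) + 1) ^ 2 - z ^ 2 ≠ 0 := by nlinarith [Nat.cast_nonneg (α := ℝ) m]
    have hne' : ((m : ℂ) + 1) ^ 2 - (z : ℂ) ^ 2 ≠ 0 := by exact_mod_cast hne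
    rw [show ((z : ℂ) + (m + 1)) * (z - (m + 1)) = -(((m : ℂ) + 1) ^ 2 - (z : ℂ) ^ 2) by ring]
    field_simp
  · have : (z : ℂ) ≠ 0 := by exact_mod_cast h0.ne'
    push_cast
    field_simp
    ring

/-- The power series `x cot x = -2 ∑ ζ(2n) (x / π) ^ (2n)`, with `x = π z`. -/
lemma hasSum_mul_cot {z : ℝ} (h0 : 0 < z) (h1 : z < 1) :
    HasSum (fun n : ℕ => -2 * zetaEven n * z ^ (2 * n)) (π * z * Real.cot (π * z)) := by
  let f : ℕ × ℕ → ℝ := fun p => (z ^ 2 / ((p.1 : ℝ) + 1) ^ 2) ^ (p.2 + 1)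
  have hf : 0 ≤ f := fun p => by positivity
  have hrow (m : ℕ) : HasSum (fun k => f (m, k)) (z ^ 2 / (((m : ℝ) + 1) ^ 2 - z ^ 2)) := by
    have hm : (0 : ℝ) ≤ m := Nat.cast_nonneg m
    have hlt : z ^ 2 / ((m : ℝ) + 1) ^ 2 < 1 := by
      rw [div_lt_one (by positivity)]; nlinarith
    have hne : ((m : ℝ) + 1) ^ 2 - z ^ 2 ≠ 0 := by nlinarith
    have := (hasSum_geometric_of_lt_one (by positivity) hlt).mul_left (z ^ 2 / ((m : ℝ) + 1) ^ 2)
    convert! this using 1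
    · funext k; simp only [f]; rw [pow_succ]; ring
    · have : 1 - z ^ 2 / ((m : ℝ) + 1) ^ 2 = (((m : ℝ) + 1) ^ 2 - z ^ 2) / ((m : ℝ) + 1) ^ 2 := by
        field_simp
      rw [this]
      field_simp
  have hpf := hasSum_cot_partial_fractions h0 h1
  have hsum : Summable f := by
    rw [summable_prod_of_nonneg hf]
    refine ⟨fun m => (hrow m).summable, ?_⟩
    simp_rw [fun m => (hrow m).tsum_eq]
    exact hpf.summable
  have htot : HasSum f ((1 - π * z * Real.cot (π * z)) / 2) := by
    have := hsum.hasSum.prod_fiberwise hrow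
    rw [← this.unique hpf]
    exact hsum.hasSum
  have hcol : HasSum (fun k => zetaEven (k + 1) * z ^ (2 * (k + 1)))
      ((1 - π * z * Real.cot (π * z)) / 2) := by
    have hswap : HasSum (f ∘ Prod.swap) ((1 - π * z * Real.cot (π * z)) / 2) :=
      (Equiv.prodComm ℕ ℕ).hasSum_iff.mpr htot
    refine hswap.prod_fiberwise fun k => ?_
    have h := (hswap.summable.prod_factor k).hasSum
    convert! h using 1
    rw [zetaEven_succ, ← tsum_mul_right]
    refine tsum_congr fun m => ?_
    simp only [f, Function.comp, Prod.swap]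
    rw [div_pow, ← pow_mul, ← pow_mul]
    ring
  rw [← hasSum_nat_add_iff' 1]
  convert! hcol.mul_left (-2) using 1
  · funext k; ring
  · simp [zetaEven_zero]; ring

lemma integral_beta_nat (p q : ℕ) :
    ∫ x in (0 : ℝ)..1, x ^ p * (1 - x) ^ q =
      (p.factorial * q.factorial : ℝ) / (p + q + 1).factorial := by
  have h := Complex.Gamma_mul_Gamma_eq_betaIntegral (s := (p : ℂ) + 1) (t := (q : ℂ) + 1)
    (by simp; positivity) (by simp; positivity)
  rw [show (p : ℂ) + 1 + (q + 1) = ((p + q + 1 : ℕ) : ℂ) + 1 by push_cast; ring,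
    Complex.Gamma_nat_eq_factorial, Complex.Gamma_nat_eq_factorial,
    Complex.Gamma_nat_eq_factorial, Complex.betaIntegral] at h
  simp only [add_sub_cancel_right, Complex.cpow_natCast] at h
  have h' : (p.factorial * q.factorial : ℝ) =
      (p + q + 1).factorial * ∫ x in (0 : ℝ)..1, x ^ p * (1 - x) ^ q := by
    rw [← Complex.ofReal_inj]
    push_cast [← intervalIntegral.integral_ofReal]
    exact h
  rw [h']
  field_simp

lemma integral_scaled_beta_nat (p q : ℕ) :
    ∫ x in (0 : ℝ)..(π / 2), x ^ p * (1 - (2 / π) * x) ^ q =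
      (π / 2) ^ (p + 1) * ((p.factorial * q.factorial : ℝ) / (p + q + 1).factorial) := by
  have h := intervalIntegral.mul_integral_comp_mul_left (a := 0) (b := 1) (c := π / 2)
    (f := fun x : ℝ => x ^ p * (1 - (2 / π) * x) ^ q)
  rw [mul_zero, mul_one] at h
  rw [← h, ← integral_beta_nat, ← intervalIntegral.integral_const_mul,
    ← intervalIntegral.integral_const_mul]
  refine intervalIntegral.integral_congr fun x _ => ?_
  have : 2 / π * (π / 2 * x) = x := by field_simp
  simp only [this]
  ring

lemma hasSum_cot_integral (a b : ℕ) :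
    HasSum (fun n : ℕ => ∫ x in (0 : ℝ)..(π / 2),
        -2 * zetaEven n / π ^ (2 * n) *
          (x ^ (2 * n + 2 * a + 1) * (1 - (2 / π) * x) ^ (2 * b + 1)))
      (∫ x in (0 : ℝ)..(π / 2),
        x ^ (2 * a + 2) * (1 - (2 / π) * x) ^ (2 * b + 1) * Real.cot x) := by
  have hpi := Real.pi_pos
  -- Each term of the power series of `x cot x` has its largest norm at `x = π / 2`, i.e. `z = 1 / 2`.
  have hS : Summable fun n : ℕ => |(-2 * zetaEven n * (1 / 2) ^ (2 * n) : ℝ)| :=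
    (hasSum_mul_cot (z := 1 / 2) (by norm_num) (by norm_num)).summable.abs
  refine intervalIntegral.hasSum_integral_of_dominated_convergence
    (fun n _ => |(-2 * zetaEven n * (1 / 2) ^ (2 * n) : ℝ)| * (π / 2) ^ (2 * a + 1))
    (fun n => ?_) (fun n => ?_) ?_ ?_ ?_
  · exact Continuous.aestronglyMeasurable (by fun_prop)
  · refine MeasureTheory.ae_of_all _ fun x hx => ?_
    rw [Set.uIoc_of_le (by positivity)] at hx
    obtain ⟨hx0, hx1⟩ := hx
    have h2 : 2 / π * x ≤ 1 := by rw [div_mul_eq_mul_div, div_le_one hpi]; linarith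
    have h3 : 0 ≤ 2 / π * x := by positivity
    rw [Real.norm_eq_abs,
      show -2 * zetaEven n / π ^ (2 * n) *
          (x ^ (2 * n + 2 * a + 1) * (1 - (2 / π) * x) ^ (2 * b + 1)) =
        (-2 * zetaEven n) * ((x / π) ^ (2 * n) * (x ^ (2 * a + 1) *
          (1 - (2 / π) * x) ^ (2 * b + 1))) by rw [div_pow, pow_add, pow_add, pow_add]; ring,
      abs_mul, abs_mul (-2 * zetaEven n), mul_assoc]
    refine mul_le_mul_of_nonneg_left ?_ (abs_nonneg _)
    have h4 : 0 ≤ 1 - 2 / π * x := by linarith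
    rw [abs_of_nonneg (by positivity), abs_of_nonneg (by positivity)]
    have h5 : x / π ≤ 1 / 2 := by rw [div_le_iff₀ hpi]; linarith
    have h6 : (1 - 2 / π * x) ^ (2 * b + 1) ≤ 1 := pow_le_one₀ h4 (by linarith)
    calc (x / π) ^ (2 * n) * (x ^ (2 * a + 1) * (1 - (2 / π) * x) ^ (2 * b + 1))
        ≤ (1 / 2) ^ (2 * n) * ((π / 2) ^ (2 * a + 1) * 1) := by gcongr
      _ = _ := by rw [mul_one]
  · exact MeasureTheory.ae_of_all _ fun x _ => hS.mul_right _
  · exact intervalIntegrable_const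
  · refine MeasureTheory.ae_of_all _ fun x hx => ?_
    rw [Set.uIoc_of_le (by positivity)] at hx
    obtain ⟨hx0, hx1⟩ := hx
    have h := (hasSum_mul_cot (z := x / π) (by positivity)
      (by rw [div_lt_one hpi]; linarith)).mul_right
        (x ^ (2 * a + 1) * (1 - (2 / π) * x) ^ (2 * b + 1))
    rw [mul_div_cancel₀ x hpi.ne'] at h
    convert! h using 1
    · funext n
      rw [div_pow, pow_add, pow_add, pow_add]; ring
    · ring

/-- Evaluation of the cotangent integral appearing in the proof of Lupu's first conjecture. -/
theorem cot_integral_even (a b : ℕ) :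
    ((∫ x in (0 : ℝ)..(π / 2),
        x ^ (2 * a + 2) * (1 - (2 / π) * x) ^ (2 * b + 1) * Real.cot x : ℝ) : ℂ) =
      -((π : ℂ) ^ (2 * a + 2) * (Nat.factorial (2 * b + 1) : ℂ) / 2 ^ (2 * a + 1)) *
        ∑' n : ℕ, riemannZeta (2 * n) * (Nat.factorial (2 * n + 2 * a + 1) : ℂ) /
          (2 ^ (2 * n) * (Nat.factorial (2 * n + 2 * a + 2 * b + 3) : ℂ)) := by
  rw [← (hasSum_cot_integral a b).tsum_eq, Complex.ofReal_tsum, ← tsum_mul_left]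
  refine tsum_congr fun n => ?_
  rw [intervalIntegral.integral_const_mul, integral_scaled_beta_nat, ← ofReal_zetaEven,
    show 2 * n + 2 * a + 1 + (2 * b + 1) + 1 = 2 * n + 2 * a + 2 * b + 3 by ring]
  push_cast
  have hpi : (π : ℂ) ≠ 0 := by exact_mod_cast Real.pi_ne_zero
  have hfac : ((2 * n + 2 * a + 2 * b + 3).factorial : ℂ) ≠ 0 := by
    exact_mod_cast Nat.factorial_ne_zero _
  rw [show 2 * n + 2 * a + 1 + 1 = 2 * n + (2 * a + 1) + 1 by ring, div_pow]
  simp only [pow_add, pow_one, pow_two]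
  field_simp
end

section
/- For all nonnegative integers a and b, ∫_0^{π/2} x^{2a+1} (1 - (2/π)x)^{2b+1} cot(x) dx = -(π^{2a+1} (2b+1)! / 2^{2a}) · Σ_{n=0}^{∞} ζ(2n) (2n+2a)! / (2^{2n} (2n+2a+2b+2)!), where ζ denotes the Riemann zeta function (with ζ(0) = -1/2 given by analytic continuation). -/
/-!
The partial fraction expansion of the cotangent, with each fraction expanded as a geometric series,
gives `∑ ζ(2n) x^(2n) = -(π x cot (π x)) / 2` for `0 < x < 1`; the `n = 0` term is the
contribution of the pole of the cotangent at `0`, thanks to `ζ(0) = -1/2`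
(`hasSum_evenZeta_mul_pow`). The double series has nonnegative terms, so its two orders of
summation agree.

Substituting `x = (π/2) t` turns the integral into one over `[0, 1]`, where the series, taken at
`t/2`, is dominated termwise by its value at `1/2`. Integrating term by term produces the Beta
integrals `∫ t^(2n+2a) (1-t)^(2b+1) = (2n+2a)! (2b+1)! / (2n+2a+2b+2)!` (`integral_pow_mul`).
-/

open Real Finset

/-- The value `ζ(2n)` as a real number; it is `-1/2` for `n = 0`. -/
noncomputable def evenZeta (n : ℕ) : ℝ := (riemannZeta (2 * n)).re

lemma hasSum_of_eq {E : Type*} [AddCommMonoid E] [TopologicalSpace E] {f g : ℕ → E} {u v : E}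
    (h : HasSum g v) (hf : ∀ n, f n = g n) (hu : u = v) : HasSum f u := by
  rw [hu, funext hf]
  exact h

lemma evenZeta_zero : evenZeta 0 = -1 / 2 := by
  simp only [evenZeta, Nat.cast_zero, mul_zero, riemannZeta_zero]
  norm_num

lemma evenZeta_succ (k : ℕ) :
    evenZeta (k + 1) = ∑' m : ℕ, 1 / ((m : ℝ) + 1) ^ (2 * (k + 1)) := by
  rw [evenZeta, riemannZeta_two_mul_succ, Complex.ofReal_re]

lemma ofReal_evenZeta (n : ℕ) : ((evenZeta n : ℝ) : ℂ) = riemannZeta (2 * n) := by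
  cases n with
  | zero =>
    rw [evenZeta_zero, Nat.cast_zero, mul_zero, riemannZeta_zero]
    norm_num
  | succ k => rw [evenZeta_succ, riemannZeta_two_mul_succ]

/-- The partial fraction expansion of the cotangent on `(0, 1)`, with the terms at `±(m + 1)`
paired. -/
lemma hasSum_cot {x : ℝ} (h0 : 0 < x) (h1 : x < 1) :
    HasSum (fun m : ℕ ↦ x ^ 2 / (((m : ℝ) + 1) ^ 2 - x ^ 2))
      (1 / 2 - π * x * Real.cot (π * x) / 2) := by
  have hz : (x : ℂ) ∈ Complex.integerComplement := by
    rw [Complex.mem_integerComplement_iff]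
    rintro ⟨n, hn⟩
    have hn' : (n : ℝ) = x := by exact_mod_cast hn
    rw [← hn'] at h0 h1
    have h0' : 0 < n := by exact_mod_cast h0
    have h1' : n < 1 := by exact_mod_cast h1
    omega
  have hs := (summable_cotTerm hz).hasSum
  rw [← cot_series_rep' hz] at hs
  have hs' := hs.mul_left (-(x : ℂ) / 2)
  rw [← Complex.hasSum_ofReal]
  have hx : (x : ℂ) ≠ 0 := by exact_mod_cast h0.ne'
  refine hasSum_of_eq hs' (fun m ↦ ?_) ?_
  · have hm : (0 : ℝ) ≤ m := Nat.cast_nonneg m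
    have e1 : (x : ℂ) - (m + 1) ≠ 0 := by
      have : x - (m + 1) ≠ 0 := by
        have : x - (m + 1) < 0 := by linarith
        exact this.ne
      exact_mod_cast this
    have e2 : (x : ℂ) + (m + 1) ≠ 0 := by
      have : x + (m + 1) ≠ 0 := by positivity
      exact_mod_cast this
    have e3 : ((m : ℂ) + 1) ^ 2 - (x : ℂ) ^ 2 ≠ 0 := by
      rw [show ((m : ℂ) + 1) ^ 2 - (x : ℂ) ^ 2 = -((x - (m + 1)) * (x + (m + 1))) by ring]
      exact neg_ne_zero.mpr (mul_ne_zero e1 e2)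
    simp only [cotTerm]
    push_cast
    rw [one_div_add_one_div e1 e2, div_mul_div_comm, div_eq_div_iff e3 (by simp [e1, e2])]
    ring
  · push_cast
    field_simp
    ring

/-- The generating function of the even zeta values. -/
lemma hasSum_evenZeta_mul_pow {x : ℝ} (h0 : 0 < x) (h1 : x < 1) :
    HasSum (fun n : ℕ ↦ evenZeta n * x ^ (2 * n)) (-(π * x * Real.cot (π * x)) / 2) := by
  have hc := hasSum_cot h0 h1
  have hgeo : ∀ m : ℕ, HasSum (fun k : ℕ ↦ (x ^ 2 / ((m : ℝ) + 1) ^ 2) ^ (k + 1))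
      (x ^ 2 / (((m : ℝ) + 1) ^ 2 - x ^ 2)) := by
    intro m
    have hm : (0 : ℝ) ≤ m := Nat.cast_nonneg m
    have hlt : x ^ 2 < ((m : ℝ) + 1) ^ 2 := by nlinarith
    have hpos : (0 : ℝ) < ((m : ℝ) + 1) ^ 2 := by positivity
    have hr : x ^ 2 / ((m : ℝ) + 1) ^ 2 < 1 := by rwa [div_lt_one hpos]
    have := (hasSum_geometric_of_lt_one (by positivity) hr).mul_left (x ^ 2 / ((m : ℝ) + 1) ^ 2)
    refine hasSum_of_eq this (fun k ↦ ?_) ?_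
    · rw [pow_succ']
    · have : ((m : ℝ) + 1) ^ 2 - x ^ 2 ≠ 0 := (sub_pos.mpr hlt).ne'
      field_simp
  have hsum : Summable (fun p : ℕ × ℕ ↦ (x ^ 2 / ((p.1 : ℝ) + 1) ^ 2) ^ (p.2 + 1)) := by
    rw [summable_prod_of_nonneg (fun p ↦ by positivity)]
    refine ⟨fun m ↦ (hgeo m).summable, ?_⟩
    simp_rw [(hgeo _).tsum_eq]
    exact hc.summable
  have htot := (hsum.hasSum.prod_fiberwise hgeo).unique hc
  have hswap := (Equiv.prodComm ℕ ℕ).hasSum_iff.mpr hsum.hasSum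
  have hk : ∀ k : ℕ, HasSum (fun m : ℕ ↦ (x ^ 2 / ((m : ℝ) + 1) ^ 2) ^ (k + 1))
      (evenZeta (k + 1) * x ^ (2 * (k + 1))) := by
    intro k
    have := (hswap.summable.prod_factor k).hasSum
    refine hasSum_of_eq this (fun _ ↦ rfl) ?_
    rw [evenZeta_succ, ← tsum_mul_right]
    congr 1 with m
    simp only [Function.comp, Equiv.prodComm_apply, Prod.swap]
    rw [div_pow, ← pow_mul, ← pow_mul]
    ring
  have hfin := hswap.prod_fiberwise hk
  rw [htot] at hfin
  have := (hasSum_nat_add_iff (f := fun n : ℕ ↦ evenZeta n * x ^ (2 * n)) 1).mp hfin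
  refine hasSum_of_eq this (fun _ ↦ rfl) ?_
  simp only [Finset.sum_range_one, evenZeta_zero]
  ring

/-- The Beta integral at positive integers. -/
lemma integral_pow_mul (m k : ℕ) :
    ∫ t in (0 : ℝ)..1, t ^ m * (1 - t) ^ k =
      ((m.factorial : ℝ) * k.factorial) / (m + k + 1).factorial := by
  have h := Complex.Gamma_mul_Gamma_eq_betaIntegral (s := m + 1) (t := k + 1)
    (by simp; positivity) (by simp; positivity)
  rw [Complex.Gamma_nat_eq_factorial, Complex.Gamma_nat_eq_factorial,
    show ((m : ℂ) + 1 + (k + 1)) = ((m + k + 1 : ℕ) : ℂ) + 1 by push_cast; ring,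
    Complex.Gamma_nat_eq_factorial, Complex.betaIntegral] at h
  simp only [add_sub_cancel_right, Complex.cpow_natCast] at h
  have hne : ((m + k + 1).factorial : ℝ) ≠ 0 := by exact_mod_cast Nat.factorial_ne_zero _
  rw [eq_div_iff hne, mul_comm]
  apply Complex.ofReal_injective
  push_cast
  rw [h, ← intervalIntegral.integral_ofReal]
  push_cast
  rfl

/-- Term-by-term integration of the cotangent series, after rescaling to `[0, 1]`. -/
lemma hasSum_integral_cot (a b : ℕ) :
    HasSum (fun n : ℕ ↦ evenZeta n / 2 ^ (2 * n) *
        ((((2 * n + 2 * a).factorial : ℝ) * (2 * b + 1).factorial) /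
          ((2 * n + 2 * a + 2 * b + 2).factorial : ℝ)))
      (∫ t in (0 : ℝ)..1, t ^ (2 * a) * (1 - t) ^ (2 * b + 1) *
        (-(π * (t / 2) * Real.cot (π * (t / 2))) / 2)) := by
  have key := intervalIntegral.hasSum_integral_of_dominated_convergence
    (μ := MeasureTheory.volume) (a := (0 : ℝ)) (b := 1)
    (F := fun (n : ℕ) (t : ℝ) ↦
      t ^ (2 * a) * (1 - t) ^ (2 * b + 1) * (evenZeta n * (t / 2) ^ (2 * n)))
    (f := fun t ↦ t ^ (2 * a) * (1 - t) ^ (2 * b + 1) *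
        (-(π * (t / 2) * Real.cot (π * (t / 2))) / 2))
    (fun n _ ↦ |evenZeta n * (1 / 2) ^ (2 * n)|)
    (fun n ↦ (by fun_prop : Continuous _).aestronglyMeasurable) ?_ ?_ ?_ ?_
  · refine hasSum_of_eq key (fun n ↦ ?_) rfl
    have hb := integral_pow_mul (2 * n + 2 * a) (2 * b + 1)
    rw [show 2 * n + 2 * a + (2 * b + 1) + 1 = 2 * n + 2 * a + 2 * b + 2 by ring] at hb
    rw [← hb, ← intervalIntegral.integral_const_mul]
    congr 1 with t
    rw [div_pow]
    ring
  · refine fun n ↦ Filter.Eventually.of_forall fun t ht ↦ ?_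
    rw [Set.uIoc_of_le zero_le_one] at ht
    obtain ⟨ht0, ht1⟩ := ht
    rw [Real.norm_eq_abs, abs_mul, abs_mul (evenZeta n), abs_mul (evenZeta n)]
    have e1 : |t ^ (2 * a) * (1 - t) ^ (2 * b + 1)| ≤ 1 := by
      have hn : (0 : ℝ) ≤ 1 - t := by linarith
      rw [abs_of_nonneg (by positivity)]
      exact mul_le_one₀ (pow_le_one₀ ht0.le ht1) (by positivity)
        (pow_le_one₀ hn (by linarith))
    have e2 : |(t / 2) ^ (2 * n)| ≤ |(1 / 2 : ℝ) ^ (2 * n)| := by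
      rw [abs_of_nonneg (by positivity), abs_of_nonneg (by positivity)]
      gcongr
    calc _ ≤ 1 * (|evenZeta n| * |(1 / 2 : ℝ) ^ (2 * n)|) := by gcongr
      _ = _ := one_mul _
  · exact Filter.Eventually.of_forall fun t _ ↦
      (hasSum_evenZeta_mul_pow (x := 1 / 2) (by norm_num) (by norm_num)).summable.abs
  · exact intervalIntegrable_const
  · refine Filter.Eventually.of_forall fun t ht ↦ ?_
    rw [Set.uIoc_of_le zero_le_one] at ht
    exact (hasSum_evenZeta_mul_pow (x := t / 2) (by linarith [ht.1]) (by linarith [ht.2])).mul_left _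

/-- Evaluation of the cotangent integral appearing in the proof of Lupu's second conjecture. -/
theorem cot_integral_odd (a b : ℕ) :
    ((∫ x in (0 : ℝ)..(π / 2),
        x ^ (2 * a + 1) * (1 - (2 / π) * x) ^ (2 * b + 1) * Real.cot x : ℝ) : ℂ) =
      -((π : ℂ) ^ (2 * a + 1) * (Nat.factorial (2 * b + 1) : ℂ) / 2 ^ (2 * a)) *
        ∑' n : ℕ, riemannZeta (2 * n) * (Nat.factorial (2 * n + 2 * a) : ℂ) /
          (2 ^ (2 * n) * (Nat.factorial (2 * n + 2 * a + 2 * b + 2) : ℂ)) := by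
  have hpi : π ≠ 0 := Real.pi_ne_zero
  have hsub : ∫ x in (0 : ℝ)..(π / 2),
      x ^ (2 * a + 1) * (1 - (2 / π) * x) ^ (2 * b + 1) * Real.cot x =
      -2 * (π / 2) ^ (2 * a + 1) * ∫ t in (0 : ℝ)..1, t ^ (2 * a) * (1 - t) ^ (2 * b + 1) *
        (-(π * (t / 2) * Real.cot (π * (t / 2))) / 2) := by
    have h := intervalIntegral.mul_integral_comp_mul_left (a := 0) (b := 1)
      (f := fun x ↦ x ^ (2 * a + 1) * (1 - (2 / π) * x) ^ (2 * b + 1) * Real.cot x) (π / 2)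
    rw [mul_zero, mul_one] at h
    rw [← h, ← intervalIntegral.integral_const_mul, ← intervalIntegral.integral_const_mul]
    congr 1 with t
    rw [show 2 / π * (π / 2 * t) = t by field_simp, show π / 2 * t = π * (t / 2) by ring]
    ring
  have hterm : ∀ n : ℕ, riemannZeta (2 * n) * (Nat.factorial (2 * n + 2 * a) : ℂ) /
      (2 ^ (2 * n) * (Nat.factorial (2 * n + 2 * a + 2 * b + 2) : ℂ)) =
      ((evenZeta n * Nat.factorial (2 * n + 2 * a) /
        (2 ^ (2 * n) * Nat.factorial (2 * n + 2 * a + 2 * b + 2)) : ℝ) : ℂ) := by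
    intro n
    rw [← ofReal_evenZeta]
    push_cast
    rfl
  simp_rw [hterm]
  rw [← Complex.ofReal_tsum, hsub, ← (hasSum_integral_cot a b).tsum_eq]
  have hfac : ∀ n : ℕ, evenZeta n / 2 ^ (2 * n) *
        ((((2 * n + 2 * a).factorial : ℝ) * (2 * b + 1).factorial) /
          ((2 * n + 2 * a + 2 * b + 2).factorial : ℝ)) = Nat.factorial (2 * b + 1) *
      (evenZeta n * Nat.factorial (2 * n + 2 * a) /
        (2 ^ (2 * n) * Nat.factorial (2 * n + 2 * a + 2 * b + 2))) := by
    intro n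
    ring
  simp_rw [hfac]
  rw [tsum_mul_left]
  push_cast
  rw [div_pow, pow_succ (2 : ℂ)]
  ring
end

section
/- For all nonnegative integers a and b, ∫_0^{π/2} x^{2a+1} (1 - (2/π)x)^{2b+1} cot(x) dx = -2 · Σ_{n=0}^{∞} (ζ(2n)/π^{2n}) · ∫_0^{π/2} x^{2n+2a} (1 - (2/π)x)^{2b+1} dx; that is, the termwise integration of the cotangent series against x^{2a}(1-(2/π)x)^{2b+1} is valid, where ζ denotes the Riemann zeta function (with ζ(0) = -1/2 given by analytic continuation). -/
/-!
The cotangent series comes from the Mittag-Leffler expansion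
`π cot (π w) = 1 / w + ∑ₘ 2 w / (w² - (m+1)²)`: for `0 < w < 1` each term is, up to the factor
`-2 / w`, the sum of a geometric series in `w² / (m+1)²`, all of whose terms are nonnegative, so the
double series may be summed over `m` first, which produces `ζ(2k+2) w^(2k+2)`. Putting `w = x / π`
gives `hasSum_zeta_mul_pow`.

This series converges absolutely at the endpoint `x = π / 2`, which lies inside the disc of
convergence. On `(0, π / 2]` its values at `π / 2` dominate, since the remaining factor
`x^(2a) (1 - 2x/π)^(2b+1)` is bounded by `(π / 2)^(2a)`, and dominated convergence allows
integration term by term.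
-/

open Real

/-- The zeta value `ζ(2k+2)` as a sum over `m + 1`, scaled by powers of `w`. -/
lemma hasSum_zeta_fiber (w : ℝ) (k : ℕ) :
    HasSum (fun m : ℕ => (((w ^ 2 / ((m : ℝ) + 1) ^ 2) ^ (k + 1) : ℝ) : ℂ))
      (riemannZeta (2 * ((k + 1 : ℕ) : ℂ)) * (w : ℂ) ^ (2 * (k + 1))) := by
  have hk : 1 < 2 * (k + 1) := by omega
  have hs : Summable fun n : ℕ => 1 / (n : ℂ) ^ (2 * (k + 1)) := by
    have := Complex.summable_one_div_nat_cpow (p := ((2 * (k + 1) : ℕ) : ℂ))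
    simp only [Complex.cpow_natCast, Complex.natCast_re] at this
    exact this.2 (by exact_mod_cast hk)
  have h0 := hs.hasSum
  rw [← zeta_nat_eq_tsum_of_gt_one hk, ← hasSum_nat_add_iff' 1] at h0
  have h1 := h0.mul_right ((w : ℂ) ^ (2 * (k + 1)))
  convert! h1 using 1
  · funext m
    push_cast
    rw [div_pow, ← pow_mul, ← pow_mul]
    ring
  · simp

/-- The geometric series in `w² / (m+1)²` sums to a multiple of the `m`-th Mittag-Leffler term. -/
lemma hasSum_geom_fiber {w : ℝ} (h0 : 0 < w) (h1 : w < 1) (m : ℕ) :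
    HasSum (fun k : ℕ => (w ^ 2 / ((m : ℝ) + 1) ^ 2) ^ (k + 1))
      (-(w / 2) * (1 / (w - (m + 1)) + 1 / (w + (m + 1)))) := by
  have hm : (0 : ℝ) ≤ m := m.cast_nonneg
  have hr : w ^ 2 / ((m : ℝ) + 1) ^ 2 < 1 := by
    rw [div_lt_one (by positivity)]
    nlinarith
  have h := (hasSum_geometric_of_lt_one (by positivity) hr).mul_left (w ^ 2 / ((m : ℝ) + 1) ^ 2)
  convert! h using 1
  · funext k
    ring
  · have e1 : w - (m + 1) ≠ 0 := by linarith
    have e2 : w + (m + 1) ≠ 0 := by positivity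
    have e3 : ((m : ℝ) + 1) ≠ 0 := by positivity
    have e4 : 1 - w ^ 2 / ((m : ℝ) + 1) ^ 2 ≠ 0 := by linarith
    have e5 : ((m : ℝ) + 1) ^ 2 - w ^ 2 ≠ 0 := by nlinarith
    have e6 : 1 - w ^ 2 / ((m : ℝ) + 1) ^ 2
        = (((m : ℝ) + 1) ^ 2 - w ^ 2) / ((m : ℝ) + 1) ^ 2 := by
      field_simp
    rw [e6]
    field_simp
    ring

/-- The power series `x cot x = -2 ∑ ζ(2n) (x / π)^(2n)` on `(0, π)`. -/
lemma hasSum_zeta_mul_pow {x : ℝ} (h0 : 0 < x) (h1 : x < π) :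
    HasSum (fun n : ℕ => riemannZeta (2 * n) / (π : ℂ) ^ (2 * n) * (x : ℂ) ^ (2 * n))
      ((-(x * Real.cot x) / 2 : ℝ) : ℂ) := by
  obtain ⟨w, rfl⟩ : ∃ w, x = π * w := ⟨x / π, by field_simp⟩
  have hw0 : 0 < w := by
    by_contra! h
    nlinarith [pi_pos]
  have hw1 : w < 1 := by
    by_contra! h
    nlinarith [pi_pos]
  have hw : (w : ℂ) ∈ Complex.integerComplement := by
    rintro ⟨n, hn⟩
    have hn' : (n : ℝ) = w := by exact_mod_cast hn
    rw [← hn'] at hw0 hw1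
    have a1 : 0 < n := by exact_mod_cast hw0
    have a2 : n < 1 := by exact_mod_cast hw1
    omega
  have hML : HasSum (fun m : ℕ => -(w / 2) * (1 / (w - (m + 1)) + 1 / (w + (m + 1))))
      (-(w / 2) * (π * Real.cot (π * w) - 1 / w)) := by
    have hs := (summable_cotTerm hw).hasSum
    have he : ∑' n, cotTerm (w : ℂ) n = π * Complex.cot (π * w) - 1 / w :=
      (cot_series_rep' hw).symm
    rw [he] at hs
    have := hs.mul_left (-((w : ℂ) / 2))
    rw [← Complex.hasSum_ofReal]
    convert! this using 1
    · funext m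
      simp [cotTerm]
    · simp
  have hprod : Summable fun p : ℕ × ℕ => (w ^ 2 / ((p.1 : ℝ) + 1) ^ 2) ^ (p.2 + 1) := by
    rw [summable_prod_of_nonneg (fun p => by positivity)]
    refine ⟨fun m => (hasSum_geom_fiber hw0 hw1 m).summable, ?_⟩
    simp only [(hasSum_geom_fiber hw0 hw1 _).tsum_eq]
    exact hML.summable
  have hS := hprod.hasSum
  rw [(hS.prod_fiberwise (hasSum_geom_fiber hw0 hw1)).unique hML] at hS
  have hS' := (Complex.hasSum_ofReal.2 hS)
  rw [← (Equiv.prodComm ℕ ℕ).hasSum_iff] at hS'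
  have hk := hS'.prod_fiberwise (fun k => hasSum_zeta_fiber w k)
  -- The term `n = 0` is `ζ(0) = -1 / 2`; it accounts for the pole part `1 / w` of `π cot (π w)`.
  rw [← hasSum_nat_add_iff' 1]
  have hpi : (π : ℂ) ≠ 0 := by exact_mod_cast pi_ne_zero
  convert! hk using 1
  · funext k
    push_cast
    rw [mul_pow]
    field_simp
  · have hwc : (w : ℂ) ≠ 0 := by exact_mod_cast hw0.ne'
    simp [riemannZeta_zero]
    field_simp
    ring

/-- Termwise integration of the cotangent series against `x^{2a}(1-(2/π)x)^{2b+1}`. -/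
theorem termwise_integration_odd (a b : ℕ) :
    ((∫ x in (0 : ℝ)..(π / 2),
        x ^ (2 * a + 1) * (1 - (2 / π) * x) ^ (2 * b + 1) * Real.cot x : ℝ) : ℂ) =
      -2 * ∑' n : ℕ, riemannZeta (2 * n) / (π : ℂ) ^ (2 * n) *
        ((∫ x in (0 : ℝ)..(π / 2),
            x ^ (2 * n + 2 * a) * (1 - (2 / π) * x) ^ (2 * b + 1) : ℝ) : ℂ) := by
  have hpi := pi_pos
  have hsum := (hasSum_zeta_mul_pow (x := π / 2) (by positivity) (by linarith)).summable.norm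
  have key := intervalIntegral.hasSum_integral_of_dominated_convergence
    (μ := MeasureTheory.volume) (a := 0) (b := π / 2)
    (F := fun (n : ℕ) (x : ℝ) => riemannZeta (2 * n) / (π : ℂ) ^ (2 * n) *
      ((x ^ (2 * n + 2 * a) * (1 - (2 / π) * x) ^ (2 * b + 1) : ℝ) : ℂ))
    (f := fun x => ((-1 / 2 *
      (x ^ (2 * a + 1) * (1 - (2 / π) * x) ^ (2 * b + 1) * Real.cot x) : ℝ) : ℂ))
    (fun n _ => ‖riemannZeta (2 * n) / (π : ℂ) ^ (2 * n) * ((π / 2 : ℝ) : ℂ) ^ (2 * n)‖ *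
      (π / 2) ^ (2 * a))
    (fun n => by
      apply Continuous.aestronglyMeasurable
      fun_prop)
    (fun n => by
      filter_upwards with x hx
      rw [Set.uIoc_of_le (by positivity)] at hx
      obtain ⟨hx0, hx1⟩ := hx
      have hu : 2 / π * x ≤ 1 := by
        rw [div_mul_eq_mul_div, div_le_one hpi]
        linarith
      have hu0 : 0 ≤ 2 / π * x := by positivity
      have hq : (1 - 2 / π * x) ^ (2 * b + 1) ≤ 1 := pow_le_one₀ (by linarith) (by linarith)
      have hq0 : 0 ≤ (1 - 2 / π * x) ^ (2 * b + 1) := pow_nonneg (by linarith) _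
      rw [norm_mul, norm_mul, mul_assoc, norm_pow, Complex.norm_real, Complex.norm_real,
        norm_of_nonneg (by positivity), norm_of_nonneg (by positivity), ← pow_add]
      gcongr
      calc x ^ (2 * n + 2 * a) * (1 - 2 / π * x) ^ (2 * b + 1)
          ≤ x ^ (2 * n + 2 * a) * 1 := by gcongr
        _ ≤ (π / 2) ^ (2 * n + 2 * a) := by rw [mul_one]; gcongr)
    (by
      filter_upwards with x _
      exact hsum.mul_right _)
    intervalIntegrable_const
    (by
      filter_upwards with x hx
      rw [Set.uIoc_of_le (by positivity)] at hx
      have h := (hasSum_zeta_mul_pow hx.1 (by linarith [hx.2])).mul_right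
        ((x ^ (2 * a) * (1 - (2 / π) * x) ^ (2 * b + 1) : ℝ) : ℂ)
      convert! h using 1
      · funext n
        push_cast
        ring
      · push_cast
        ring)
  simp only [intervalIntegral.integral_const_mul, intervalIntegral.integral_ofReal] at key
  rw [key.tsum_eq]
  push_cast
  ring
end

section
/- For all nonnegative integers a and b, H(a,b) = -(4π^{2a+2b+2}/(2a+2)!) · Σ_{n=0}^{∞} ζ(2n)(2n+2a+1)! / (2^{2n} (2n+2a+2b+3)!), where H(a,b) := ζ({2}^a, 3, {2}^b) and ζ(2n) denotes the Riemann zeta function at 2n (with ζ(0) = -1/2). -/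
/-!
The identity is obtained by evaluating one integral in two ways, namely

`I = ∫_0^{π/2} u^{2a+2}/(2a+2)! · (π/2-u)^{2b+1}/(2b+1)! · cot u du`.

*As a multiple zeta value.* The powers of the arcsine have the expansion
`u^{2a+2}/(2a+2)! = ∑_{n≥1} E_a(n) sin^{2n} u / (4n² c_n)`, with `c_n = binom(2n,n)/4^n` and `E_a(n)`
is the `a`-th elementary symmetric function of `1/(4k²)`, `k < n`. The remainder after `N` terms is
controlled through its second derivative, which is the remainder for `a - 1` plus a multiple of
`sin^{2N} u / c_N` (`RwDD_succ`, `Rw_bounds`). Integrating term by term against the weight leaves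
the moments `J_b(n) = ∫ sin^{2n} u (π/2-u)^{2b}/(2b)! du`. Two integrations by parts (`Jw_rec`) show
that `J_b(n)/c_n` telescopes in `n`, so it is `π/2` times the `b`-th elementary symmetric function of
`1/(4k²)`, `k > n`. Hence `H(a,b) = 16 · 4^{a+b}/π · I` (`H_eq_Iw`).

*As a zeta series.* Inserting `u cot u = -2 ∑ ζ(2n) (u/π)^{2n}` (`hasSum_zr`, from the Mittag-Leffler
expansion of the cotangent) and evaluating Beta integrals gives the series on the right-hand side
(`Iw_hasSum_zr`).

Multiple zeta values are handled in `ℝ≥0∞`, where the smallest index can be split off and sums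
exchanged freely (`zE_cons`, `zE_replicate_append`).
-/

open Real Finset

/-! ### Multiple zeta values as iterated sums -/

/-- The factor `1 / (k+1)^x` attached to the zero-based index `k`, in `ℝ≥0∞`. -/
noncomputable def wE (x k : ℕ) : ENNReal := ENNReal.ofReal (1 / ((k + 1 : ℕ) : ℝ) ^ x)

open Classical in
/-- The part of the multiple zeta value `ζ(s)` in which all (zero-based) indices are at least `N`,
with values in `ℝ≥0∞`. The sum runs over all functions, non-monotone ones contributing `0`, so that
the first index can be split off with `Fin.consEquiv`. -/
noncomputable def zE (s : List ℕ) (N : ℕ) : ENNReal :=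
  ∑' f : Fin s.length → ℕ,
    if StrictMono f ∧ ∀ i, N ≤ f i then ∏ i, wE (s.get i) (f i) else 0

theorem zE_nil (N : ℕ) : zE [] N = 1 := by
  unfold zE
  rw [tsum_eq_single (fun i => i.elim0)]
  · rw [if_pos]
    · simp
    · exact ⟨fun i => i.elim0, fun i => i.elim0⟩
  · intro f hf
    exact absurd (funext fun i => i.elim0) hf

/-- Splitting off the smallest index `k`. -/
theorem zE_cons (x : ℕ) (s : List ℕ) (N : ℕ) :
    zE (x :: s) N = ∑' k, if N ≤ k then wE x k * zE s (k + 1) else 0 := by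
  unfold zE
  refine ((Fin.consEquiv (fun _ : Fin (s.length + 1) => ℕ)).tsum_eq _).symm.trans ?_
  refine ENNReal.tsum_prod'.trans ?_
  refine tsum_congr fun k => ?_
  by_cases hk : N ≤ k
  · rw [if_pos hk, ← ENNReal.tsum_mul_left]
    refine tsum_congr fun f => ?_
    have key : (StrictMono (Fin.cons k f : Fin (s.length + 1) → ℕ) ∧
        ∀ i, N ≤ (Fin.cons k f : Fin (s.length + 1) → ℕ) i) ↔
        StrictMono f ∧ ∀ i, k + 1 ≤ f i := by
      constructor
      · rintro ⟨h1, -⟩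
        refine ⟨fun i j hij => ?_, fun i => ?_⟩
        · simpa using h1 (Fin.succ_lt_succ_iff.2 hij)
        · simpa using h1 (Fin.succ_pos i)
      · rintro ⟨h1, h2⟩
        refine ⟨?_, fun i => ?_⟩
        · intro i j hij
          induction i using Fin.cases with
          | zero =>
            induction j using Fin.cases with
            | zero => exact absurd hij (lt_irrefl _)
            | succ j => simpa using h2 j
          | succ i =>
            induction j using Fin.cases with
            | zero => exact absurd hij (by simp)
            | succ j => simpa using h1 (Fin.succ_lt_succ_iff.1 hij)
        · induction i using Fin.cases with
          | zero => simpa using hk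
          | succ i =>
            have := h2 i
            simp only [Fin.cons_succ]
            omega
    simp only [Fin.consEquiv_apply]
    by_cases hc : StrictMono f ∧ ∀ i, k + 1 ≤ f i
    · rw [if_pos hc]
      refine (if_pos (key.2 hc)).trans ?_
      refine (Fin.prod_univ_succ (n := s.length) _).trans ?_
      simp
    · rw [if_neg hc, mul_zero]
      exact if_neg (fun h => hc (key.1 h))
  · rw [if_neg hk]
    refine ENNReal.tsum_eq_zero.2 fun f => if_neg ?_
    rintro ⟨-, h⟩
    exact hk (by simpa using h (0 : Fin (s.length + 1)))

/-- Both sides use the junk value `0` if the series diverges, so no summability is needed. -/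
theorem mzv_eq_toReal (s : List ℕ) : mzv s = (zE s 0).toReal := by
  classical
  have h : zE s 0 = ∑' f : {f : Fin s.length → ℕ // StrictMono f},
      ENNReal.ofReal (∏ i, (1 : ℝ) / ((f.1 i + 1 : ℕ) : ℝ) ^ (s.get i)) := by
    refine Eq.trans ?_ (tsum_subtype {f : Fin s.length → ℕ | StrictMono f}
      (fun f => ENNReal.ofReal (∏ i, (1 : ℝ) / ((f i + 1 : ℕ) : ℝ) ^ (s.get i)))).symm
    unfold zE
    refine tsum_congr fun f => ?_
    simp only [zero_le, implies_true, and_true, Set.indicator_apply, Set.mem_ofPred_eq]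
    refine if_congr Iff.rfl ?_ rfl
    rw [ENNReal.ofReal_prod_of_nonneg (fun i _ => by positivity)]
    rfl
  rw [h, ENNReal.tsum_toReal_eq (fun _ => ENNReal.ofReal_ne_top)]
  unfold mzv
  refine tsum_congr fun f => (ENNReal.toReal_ofReal ?_).symm
  exact Finset.prod_nonneg fun i _ => by positivity

/-- `esq a n` is the elementary symmetric polynomial of degree `a` in `1/1², …, 1/n²`, built by
recursion on the largest index. -/
noncomputable def esq : ℕ → ℕ → ℝ
  | 0, _ => 1
  | a + 1, n => ∑ k ∈ range n, esq a k / ((k : ℝ) + 1) ^ 2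

theorem esq_nonneg (a n : ℕ) : 0 ≤ esq a n := by
  induction a generalizing n with
  | zero => simp [esq]
  | succ a ih =>
    rw [esq]
    exact Finset.sum_nonneg fun k _ => div_nonneg (ih k) (by positivity)

theorem esq_succ_zero (a : ℕ) : esq (a + 1) 0 = 0 := by simp [esq]

theorem esq_succ_succ (a n : ℕ) :
    esq (a + 1) (n + 1) = esq (a + 1) n + esq a n / ((n : ℝ) + 1) ^ 2 := by
  simp only [esq, Finset.sum_range_succ]

/-- Summing over the indices of the leading `2`s first leaves a sum over the zero-based index `n`
of the entry `x`. -/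
theorem zE_replicate_append (a x : ℕ) (s : List ℕ) :
    zE (List.replicate a 2 ++ x :: s) 0 =
      ∑' n, ENNReal.ofReal (esq a n) * (wE x n * zE s (n + 1)) := by
  induction a generalizing x s with
  | zero => simp [zE_cons, esq]
  | succ a ih =>
    have h : List.replicate (a + 1) 2 ++ x :: s = List.replicate a 2 ++ 2 :: (x :: s) := by
      rw [List.replicate_succ', List.append_assoc]; rfl
    rw [h, ih]
    simp_rw [zE_cons, ← ENNReal.tsum_mul_left]
    rw [ENNReal.tsum_comm]
    refine tsum_congr fun n => ?_
    rw [esq, ENNReal.ofReal_sum_of_nonneg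
      (fun k _ => div_nonneg (esq_nonneg a k) (by positivity)), Finset.sum_mul]
    rw [tsum_eq_sum (s := range n)]
    · refine Finset.sum_congr rfl fun k hk => ?_
      rw [if_pos (Nat.succ_le_of_lt (Finset.mem_range.1 hk)), div_eq_mul_one_div, ENNReal.ofReal_mul (esq_nonneg a k),
        mul_assoc]
      simp [wE]
    · intro k hk
      rw [if_neg (by simpa using hk)]
      simp

/-- The recursion and the limit in `n` determine `t b N` as a telescoping sum, which is the tail
of `ζ({2}^b)` over indices larger than `N` (in the one-based count). -/
theorem zE_replicate_eq (t : ℕ → ℕ → ℝ) (h0 : ∀ n, t 0 n = 1)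
    (hnn : ∀ b n, 0 ≤ t b n)
    (hs : ∀ b n, t (b + 1) n = t (b + 1) (n + 1) + t b (n + 1) / ((n : ℝ) + 1) ^ 2)
    (hl : ∀ b, Filter.Tendsto (t (b + 1)) Filter.atTop (nhds 0)) (b N : ℕ) :
    zE (List.replicate b 2) N = ENNReal.ofReal (t b N) := by
  induction b generalizing N with
  | zero => simp [zE_nil, h0]
  | succ b ih =>
    rw [List.replicate_succ, zE_cons]
    simp_rw [ih]
    have hsum : HasSum (fun m => t b (m + N + 1) / (((m + N : ℕ) : ℝ) + 1) ^ 2) (t (b + 1) N) := by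
      rw [hasSum_iff_tendsto_nat_of_nonneg (fun m => div_nonneg (hnn _ _) (by positivity))]
      have hp : ∀ M, ∑ m ∈ range M, t b (m + N + 1) / (((m + N : ℕ) : ℝ) + 1) ^ 2 =
          t (b + 1) N - t (b + 1) (M + N) := by
        intro M
        induction M with
        | zero => simp
        | succ M ihM =>
          rw [Finset.sum_range_succ, ihM]
          have := hs b (M + N)
          rw [show M + 1 + N = M + N + 1 by ring]
          linarith
      simp_rw [hp]
      simpa using ((Filter.tendsto_add_atTop_iff_nat N).2 (hl b)).const_sub (t (b + 1) N)
    have e1 : ENNReal.ofReal (t (b + 1) N) = ∑' m, wE 2 (m + N) * ENNReal.ofReal (t b (m + N + 1)) := by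
      rw [← hsum.tsum_eq, ENNReal.ofReal_tsum_of_nonneg
        (fun m => div_nonneg (hnn _ _) (by positivity)) hsum.summable]
      refine tsum_congr fun m => ?_
      rw [wE, ← ENNReal.ofReal_mul (by positivity)]
      congr 1
      push_cast
      ring
    rw [e1]
    refine (Summable.sum_add_tsum_nat_add' (k := N) ENNReal.summable).symm.trans ?_
    rw [Finset.sum_eq_zero, zero_add]
    · refine tsum_congr fun m => ?_
      rw [if_pos (Nat.le_add_left _ _)]
    · intro m hm
      rw [if_neg (by simpa using hm)]

theorem H_eq_of_hasSum (t : ℕ → ℕ → ℝ) (h0 : ∀ n, t 0 n = 1)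
    (hnn : ∀ b n, 0 ≤ t b n)
    (hs : ∀ b n, t (b + 1) n = t (b + 1) (n + 1) + t b (n + 1) / ((n : ℝ) + 1) ^ 2)
    (hl : ∀ b, Filter.Tendsto (t (b + 1)) Filter.atTop (nhds 0)) (a b : ℕ) {L : ℝ}
    (hL : HasSum (fun n : ℕ => esq a n * t b (n + 1) / ((n : ℝ) + 1) ^ 3) L) : H a b = L := by
  unfold H
  have hn : ∀ n : ℕ, 0 ≤ esq a n * t b (n + 1) / ((n : ℝ) + 1) ^ 3 := fun n =>
    div_nonneg (mul_nonneg (esq_nonneg _ _) (hnn _ _)) (by positivity)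
  rw [mzv_eq_toReal, zE_replicate_append]
  have : ∑' n, ENNReal.ofReal (esq a n) * (wE 3 n * zE (List.replicate b 2) (n + 1)) =
      ENNReal.ofReal L := by
    rw [← hL.tsum_eq, ENNReal.ofReal_tsum_of_nonneg hn hL.summable]
    refine tsum_congr fun n => ?_
    rw [zE_replicate_eq t h0 hnn hs hl, wE, ← ENNReal.ofReal_mul (by positivity),
      ← ENNReal.ofReal_mul (esq_nonneg _ _)]
    congr 1
    push_cast
    ring
  rw [this, ENNReal.toReal_ofReal (hL.nonneg hn)]

/-! ### Moments of even powers of the sine -/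

/-- The weight `(π/2 - u)^k / k!`. -/
noncomputable def Qw (k : ℕ) (u : ℝ) : ℝ := (π / 2 - u) ^ k / (k.factorial : ℝ)

theorem Qw_continuous (k : ℕ) : Continuous (Qw k) := by
  unfold Qw; fun_prop

theorem Qw_nonneg (k : ℕ) {u : ℝ} (h : u ≤ π / 2) : 0 ≤ Qw k u := by
  unfold Qw
  have : 0 ≤ π / 2 - u := by linarith
  positivity

theorem Qw_zero (u : ℝ) : Qw 0 u = 1 := by simp [Qw]

theorem Qw_end (k : ℕ) : Qw (k + 1) (π / 2) = 0 := by simp [Qw]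

theorem Qw_hasDerivAt (k : ℕ) (u : ℝ) : HasDerivAt (Qw (k + 1)) (-Qw k u) u := by
  unfold Qw
  have h := (((hasDerivAt_id u).const_sub (π / 2)).pow (k + 1)).div_const
    ((k + 1).factorial : ℝ)
  convert! h using 1
  rw [Nat.factorial_succ]
  push_cast
  have : (k.factorial : ℝ) ≠ 0 := by positivity
  field_simp
  simp

theorem pow_div_hasDerivAt (k : ℕ) (u : ℝ) :
    HasDerivAt (fun u : ℝ => u ^ (k + 1) / ((k + 1).factorial : ℝ))
      (u ^ k / (k.factorial : ℝ)) u := by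
  have h := (hasDerivAt_pow (k + 1) u).div_const ((k + 1).factorial : ℝ)
  convert! h using 1
  rw [Nat.factorial_succ]
  push_cast
  have : (k.factorial : ℝ) ≠ 0 := by positivity
  field_simp

theorem sin_pow_hasDerivAt (n : ℕ) (u : ℝ) :
    HasDerivAt (fun u => sin u ^ (2 * n + 2)) ((2 * n + 2) * sin u ^ (2 * n + 1) * cos u) u := by
  have h := (hasDerivAt_sin u).pow (2 * n + 2)
  convert! h using 1
  push_cast
  simp

theorem sin_pow_hasDerivAt2 (n : ℕ) (u : ℝ) :
    HasDerivAt (fun u => (2 * n + 2) * sin u ^ (2 * n + 1) * cos u)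
      ((2 * n + 2) * (2 * n + 1) * sin u ^ (2 * n) - (2 * n + 2) ^ 2 * sin u ^ (2 * n + 2)) u := by
  have h := (((hasDerivAt_sin u).pow (2 * n + 1)).const_mul (2 * (n : ℝ) + 2)).mul
    (hasDerivAt_cos u)
  convert! h using 1
  push_cast
  simp only [Pi.pow_apply]
  have := cos_sq' u
  linear_combination (-(2 * (n : ℝ) + 2) * (2 * n + 1) * sin u ^ (2 * n)) * this

/-- The Wallis product `∏_{k ≤ n} (2k-1)/(2k) = binom(2n, n) / 4^n`. -/
noncomputable def cw : ℕ → ℝ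
  | 0 => 1
  | n + 1 => (2 * n + 1) / (2 * n + 2) * cw n

theorem cw_pos (n : ℕ) : 0 < cw n := by
  induction n with
  | zero => simp [cw]
  | succ n ih => rw [cw]; positivity

/-- The moment `∫_0^{π/2} sin^{2n}(u) (π/2-u)^{2b}/(2b)! du`. -/
noncomputable def Jw (b n : ℕ) : ℝ := ∫ u in (0 : ℝ)..(π / 2), sin u ^ (2 * n) * Qw (2 * b) u

theorem Jw_nonneg (b n : ℕ) : 0 ≤ Jw b n := by
  refine intervalIntegral.integral_nonneg (by positivity) fun u hu => ?_
  exact mul_nonneg (by rw [pow_mul]; positivity) (Qw_nonneg _ hu.2)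

theorem intInt_sin_Q (n k : ℕ) :
    IntervalIntegrable (fun u => sin u ^ n * Qw k u) MeasureTheory.volume 0 (π / 2) :=
  ((by fun_prop : Continuous fun u : ℝ => sin u ^ n).mul (Qw_continuous k)).intervalIntegrable _ _

theorem Jw_zero (n : ℕ) : Jw 0 n = π / 2 * cw n := by
  induction n with
  | zero => simp [Jw, Qw_zero, cw]
  | succ n ih =>
    have h := intervalIntegral.integral_eq_sub_of_hasDerivAt
      (a := (0 : ℝ)) (b := π / 2) (fun u _ => sin_pow_hasDerivAt2 n u)
      (by apply Continuous.intervalIntegrable; fun_prop)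
    rw [intervalIntegral.integral_sub, intervalIntegral.integral_const_mul,
      intervalIntegral.integral_const_mul] at h
    · have e : ∀ m, Jw 0 m = ∫ u in (0 : ℝ)..(π / 2), sin u ^ (2 * m) := fun m => by
        simp [Jw, Qw_zero]
      rw [← e n, ← show 2 * (n + 1) = 2 * n + 2 by ring, ← e (n + 1), ih] at h
      simp only [cos_pi_div_two, sin_zero, mul_zero, zero_mul, sub_zero, ne_eq,
        Nat.add_eq_zero_iff, one_ne_zero, and_false, not_false_eq_true, zero_pow] at h
      rw [cw]
      field_simp
      have h2 : (2 * (n : ℝ) + 2) * ((2 * n + 1) * (π / 2 * cw n)) =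
        (2 * (n : ℝ) + 2) * ((2 * n + 2) * Jw 0 (n + 1)) := by linarith
      have h3 := mul_left_cancel₀ (by positivity : 2 * (n : ℝ) + 2 ≠ 0) h2
      linarith
    · apply Continuous.intervalIntegrable; fun_prop
    · apply Continuous.intervalIntegrable; fun_prop

/-- Two integrations by parts, written as one application of the fundamental theorem to
`Q_{2b+2} s' + Q_{2b+1} s` with `s = sin^{2n+2}`; both boundary terms vanish. -/
theorem Jw_rec (b n : ℕ) :
    Jw b (n + 1) = (2 * n + 2) * (2 * n + 1) * Jw (b + 1) n
      - (2 * n + 2) ^ 2 * Jw (b + 1) (n + 1) := by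
  have hd : ∀ u, HasDerivAt (fun u => Qw (2 * b + 1 + 1) u * ((2 * n + 2) * sin u ^ (2 * n + 1) * cos u)
      + Qw (2 * b + 1) u * sin u ^ (2 * n + 2))
      (((2 * n + 2) * (2 * n + 1) * (sin u ^ (2 * n) * Qw (2 * (b + 1)) u)
        - (2 * n + 2) ^ 2 * (sin u ^ (2 * (n + 1)) * Qw (2 * (b + 1)) u))
        - sin u ^ (2 * (n + 1)) * Qw (2 * b) u) u := fun u => by
    have h := ((Qw_hasDerivAt (2 * b + 1) u).mul (sin_pow_hasDerivAt2 n u)).add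
      ((Qw_hasDerivAt (2 * b) u).mul (sin_pow_hasDerivAt n u))
    convert! h using 1
    rw [show 2 * (b + 1) = 2 * b + 1 + 1 by ring]
    ring
  have i1 := (intInt_sin_Q (2 * n) (2 * (b + 1))).const_mul (((2 * n + 2) * (2 * n + 1) : ℝ))
  have i2 := (intInt_sin_Q (2 * (n + 1)) (2 * (b + 1))).const_mul (((2 * n + 2) ^ 2 : ℝ))
  have i3 := intInt_sin_Q (2 * (n + 1)) (2 * b)
  have h := intervalIntegral.integral_eq_sub_of_hasDerivAt
      (a := 0) (b := π / 2) (fun u _ => hd u) ((i1.sub i2).sub i3)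
  rw [intervalIntegral.integral_sub (i1.sub i2) i3, intervalIntegral.integral_sub i1 i2,
    intervalIntegral.integral_const_mul, intervalIntegral.integral_const_mul] at h
  simp only [Qw_end, sin_zero] at h
  simp only [ne_eq, Nat.add_eq_zero_iff, one_ne_zero, OfNat.ofNat_ne_zero, and_false,
    not_false_eq_true, zero_pow, mul_zero, zero_mul, add_zero, sub_zero] at h
  unfold Jw
  linarith

/-- The moment `Jw b n`, normalised so that it equals `e_b(1/k² : k > n)`. -/
noncomputable def tw (b n : ℕ) : ℝ := 4 ^ b * (2 / π) * (Jw b n / cw n)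

theorem tw_nonneg (b n : ℕ) : 0 ≤ tw b n := by
  have := Jw_nonneg b n
  have := cw_pos n
  unfold tw
  positivity

theorem tw_zero (n : ℕ) : tw 0 n = 1 := by
  have := (cw_pos n).ne'
  rw [tw, Jw_zero]
  field_simp

theorem tw_rec (b n : ℕ) :
    tw (b + 1) n = tw (b + 1) (n + 1) + tw b (n + 1) / ((n : ℝ) + 1) ^ 2 := by
  have := (cw_pos n).ne'
  simp only [tw]
  have h := Jw_rec b n
  rw [h, cw]
  field_simp
  ring

/-- Since `(π/2-u) ≤ (π/2) cos u` on `[0, π/2]`, positive even weights are `O(cos²)`. -/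
theorem Qw_le (b : ℕ) : ∃ D : ℝ, ∀ u, 0 ≤ u → u ≤ π / 2 → Qw (2 * (b + 1)) u ≤ D * cos u ^ 2 := by
  refine ⟨(π / 2) ^ (2 * b + 2), fun u h0 h1 => ?_⟩
  have hc : π / 2 - u ≤ π / 2 * cos u := by
    have := one_sub_mul_le_cos h0 h1
    have hp := pi_pos
    calc π / 2 - u = π / 2 * (1 - 2 / π * u) := by field_simp
      _ ≤ _ := by gcongr
  have hn : 0 ≤ π / 2 - u := by linarith
  have hcn : 0 ≤ cos u := cos_nonneg_of_mem_Icc ⟨by linarith, h1⟩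
  calc Qw (2 * (b + 1)) u ≤ (π / 2 - u) ^ (2 * (b + 1)) :=
        div_le_self (by positivity) (by exact_mod_cast Nat.factorial_pos _)
    _ ≤ (π / 2 * cos u) ^ (2 * (b + 1)) := by gcongr
    _ = (π / 2) ^ (2 * b + 2) * (cos u ^ 2 * cos u ^ (2 * b)) := by ring
    _ ≤ (π / 2) ^ (2 * b + 2) * (cos u ^ 2 * 1) := by
        gcongr
        exact pow_le_one₀ hcn (cos_le_one u)
    _ = _ := by ring

theorem tw_tendsto (b : ℕ) : Filter.Tendsto (tw (b + 1)) Filter.atTop (nhds 0) := by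
  obtain ⟨D, hD⟩ := Qw_le b
  -- The factor `cos² = 1 - sin²` turns the bound into a difference of consecutive Wallis integrals.
  have hJ : ∀ n, Jw (b + 1) n ≤ D * (Jw 0 n - Jw 0 (n + 1)) := fun n => by
    have e : D * (Jw 0 n - Jw 0 (n + 1)) = ∫ u in (0 : ℝ)..(π / 2),
        D * (sin u ^ (2 * n) * Qw (2 * 0) u - sin u ^ (2 * (n + 1)) * Qw (2 * 0) u) := by
      rw [intervalIntegral.integral_const_mul, intervalIntegral.integral_sub (intInt_sin_Q _ _)
        (intInt_sin_Q _ _)]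
      rfl
    rw [e]
    refine intervalIntegral.integral_mono_on (by positivity) (intInt_sin_Q _ _)
      (((intInt_sin_Q _ _).sub (intInt_sin_Q _ _)).const_mul _) fun u hu => ?_
    have h1 := hD u hu.1 hu.2
    have h2 : 0 ≤ sin u ^ (2 * n) := by rw [pow_mul]; positivity
    have h3 := mul_le_mul_of_nonneg_left h1 h2
    refine h3.trans (le_of_eq ?_)
    rw [cos_sq', mul_zero, Qw_zero]
    ring
  have hb : ∀ n : ℕ, tw (b + 1) n ≤ (4 ^ (b + 1) * D) * (1 / ((n : ℝ) + 1)) / 2 := fun n => by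
    have hc := cw_pos n
    have h := hJ n
    rw [Jw_zero, Jw_zero, cw] at h
    have h' : Jw (b + 1) n / cw n ≤ D * (π / 2) / (2 * n + 2) := by
      rw [div_le_iff₀ hc]
      refine h.trans (le_of_eq ?_)
      field_simp
      ring
    unfold tw
    calc _ ≤ 4 ^ (b + 1) * (2 / π) * (D * (π / 2) / (2 * n + 2)) := by gcongr
      _ = _ := by have := pi_pos; field_simp
  refine squeeze_zero (fun n => tw_nonneg _ n) hb ?_
  simpa using ((tendsto_one_div_add_atTop_nhds_zero_nat (𝕜 := ℝ)).const_mul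
    (4 ^ (b + 1) * D)).div_const 2

theorem tw_bdd (b : ℕ) : ∃ M, ∀ n, tw b n ≤ M := by
  cases b with
  | zero => exact ⟨1, fun n => (tw_zero n).le⟩
  | succ b =>
    obtain ⟨M, hM⟩ := (tw_tendsto b).bddAbove_range
    exact ⟨M, fun n => hM ⟨n, rfl⟩⟩

theorem integral_sin_cos_Q (b n : ℕ) :
    ∫ u in (0 : ℝ)..(π / 2), sin u ^ (2 * n + 1) * cos u * Qw (2 * b + 1) u =
      Jw b (n + 1) / (2 * n + 2) := by
  have hd : ∀ u, HasDerivAt (fun u => sin u ^ (2 * n + 2) * Qw (2 * b + 1) u)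
      ((2 * n + 2) * (sin u ^ (2 * n + 1) * cos u * Qw (2 * b + 1) u)
        - sin u ^ (2 * (n + 1)) * Qw (2 * b) u) u := fun u => by
    have h := (sin_pow_hasDerivAt n u).mul (Qw_hasDerivAt (2 * b) u)
    convert! h using 1
    ring
  have i1 : IntervalIntegrable (fun u => (2 * (n : ℝ) + 2) *
      (sin u ^ (2 * n + 1) * cos u * Qw (2 * b + 1) u)) MeasureTheory.volume 0 (π / 2) := by
    apply Continuous.intervalIntegrable
    have := Qw_continuous (2 * b + 1)
    fun_prop
  have i2 := intInt_sin_Q (2 * (n + 1)) (2 * b)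
  have h := intervalIntegral.integral_eq_sub_of_hasDerivAt
      (a := 0) (b := π / 2) (fun u _ => hd u) (i1.sub i2)
  rw [intervalIntegral.integral_sub i1 i2, intervalIntegral.integral_const_mul] at h
  simp only [Qw_end, sin_zero] at h
  simp only [ne_eq, Nat.add_eq_zero_iff, OfNat.ofNat_ne_zero, and_false, not_false_eq_true, zero_pow,
    mul_zero, zero_mul, sub_zero] at h
  rw [eq_div_iff (by positivity)]
  unfold Jw
  linarith

/-! ### Expansion of powers of `u` in powers of `sin u` -/

theorem nonneg_of_second_deriv {g g' g'' : ℝ → ℝ} {u : ℝ} (hu : 0 ≤ u)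
    (h1 : ∀ x, HasDerivAt g (g' x) x) (h2 : ∀ x, HasDerivAt g' (g'' x) x)
    (h0 : g 0 = 0) (h0' : g' 0 = 0) (hnn : ∀ x, 0 ≤ x → x ≤ u → 0 ≤ g'' x) : 0 ≤ g u := by
  have mono : ∀ {f f' : ℝ → ℝ}, (∀ x, HasDerivAt f (f' x) x) → f 0 = 0 →
      (∀ x, 0 ≤ x → x ≤ u → 0 ≤ f' x) → ∀ x, 0 ≤ x → x ≤ u → 0 ≤ f x := by
    intro f f' hf hf0 hf' x hx0 hxu
    have hm : MonotoneOn f (Set.Icc 0 u) := by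
      refine monotoneOn_of_deriv_nonneg (convex_Icc _ _)
        (fun y _ => (hf y).continuousAt.continuousWithinAt)
        (fun y _ => (hf y).differentiableAt.differentiableWithinAt) fun y hy => ?_
      rw [interior_Icc] at hy
      rw [(hf y).deriv]
      exact hf' y hy.1.le hy.2.le
    have := hm ⟨le_rfl, hu⟩ ⟨hx0, hxu⟩ hx0
    rwa [hf0] at this
  exact mono h1 h0 (mono h2 h0' hnn) u hu le_rfl

/-- The coefficient of `sin^{2n+2} u` in the expansion of `u^{2a+2}/(2a+2)!` in powers of `sin u`. -/
noncomputable def αw (a n : ℕ) : ℝ := esq a n / 4 ^ a / ((2 * n + 2) ^ 2 * cw (n + 1))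

theorem αw_nonneg (a n : ℕ) : 0 ≤ αw a n := by
  have := esq_nonneg a n
  have := cw_pos (n + 1)
  unfold αw; positivity

/-- The remainder of the expansion of `u^{2a+2}/(2a+2)!` after `N` terms. -/
noncomputable def Rw (a N : ℕ) (u : ℝ) : ℝ :=
  u ^ (2 * a + 2) / ((2 * a + 2).factorial : ℝ) - ∑ n ∈ range N, αw a n * sin u ^ (2 * n + 2)

/-- The derivative of `Rw a N`. -/
noncomputable def RwD (a N : ℕ) (u : ℝ) : ℝ :=
  u ^ (2 * a + 1) / ((2 * a + 1).factorial : ℝ) -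
    ∑ n ∈ range N, αw a n * ((2 * n + 2) * sin u ^ (2 * n + 1) * cos u)

/-- The second derivative of `Rw a N`. -/
noncomputable def RwDD (a N : ℕ) (u : ℝ) : ℝ :=
  u ^ (2 * a) / ((2 * a).factorial : ℝ) -
    ∑ n ∈ range N, αw a n *
      ((2 * n + 2) * (2 * n + 1) * sin u ^ (2 * n) - (2 * n + 2) ^ 2 * sin u ^ (2 * n + 2))

theorem Rw_hasDerivAt (a N : ℕ) (u : ℝ) : HasDerivAt (Rw a N) (RwD a N u) u :=
  (pow_div_hasDerivAt (2 * a + 1) u).sub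
    (HasDerivAt.fun_sum fun n _ => (sin_pow_hasDerivAt n u).const_mul _)

theorem RwD_hasDerivAt (a N : ℕ) (u : ℝ) : HasDerivAt (RwD a N) (RwDD a N u) u :=
  (pow_div_hasDerivAt (2 * a) u).sub
    (HasDerivAt.fun_sum fun n _ => (sin_pow_hasDerivAt2 n u).const_mul _)

theorem Rw_at_zero (a N : ℕ) : Rw a N 0 = 0 := by simp [Rw]

theorem RwD_at_zero (a N : ℕ) : RwD a N 0 = 0 := by simp [RwD]

/-- The second derivative of the `n`-th term is `esq a n / 4^a` times a telescoping difference. -/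
theorem αw_mul (a n : ℕ) (s : ℝ) :
    αw a n * ((2 * n + 2) * (2 * n + 1) * s ^ (2 * n) - (2 * n + 2) ^ 2 * s ^ (2 * n + 2)) =
      esq a n / 4 ^ a * (s ^ (2 * n) / cw n - s ^ (2 * (n + 1)) / cw (n + 1)) := by
  have := (cw_pos n).ne'
  simp only [αw, cw]
  field_simp
  ring

theorem RwDD_zero_left (N : ℕ) (u : ℝ) : RwDD 0 N u = sin u ^ (2 * N) / cw N := by
  have h : ∀ n, esq 0 n = 1 := fun n => by simp [esq]
  unfold RwDD
  simp_rw [αw_mul, h]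
  rw [← Finset.mul_sum, Finset.sum_range_sub' (fun n => sin u ^ (2 * n) / cw n)]
  simp [cw]

/-- Abel summation of the telescoping differences reproduces the remainder for `a`. -/
theorem RwDD_succ (a N : ℕ) (u : ℝ) :
    RwDD (a + 1) N u = Rw a N u + esq (a + 1) N / 4 ^ (a + 1) * (sin u ^ (2 * N) / cw N) := by
  unfold RwDD Rw
  simp_rw [αw_mul]
  induction N with
  | zero => simp [esq_succ_zero]; rfl
  | succ N ih =>
    rw [Finset.sum_range_succ, Finset.sum_range_succ, ← sub_sub, ih, esq_succ_succ]
    have := (cw_pos (N + 1)).ne'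
    rw [αw]
    field_simp
    ring

theorem esq_le (a : ℕ) : ∃ C : ℝ, 0 ≤ C ∧ ∀ n, esq a n ≤ C := by
  induction a with
  | zero => exact ⟨1, zero_le_one, fun n => by simp [esq]⟩
  | succ a ih =>
    obtain ⟨C, hC0, hC⟩ := ih
    have hs : Summable fun k : ℕ => 1 / ((k : ℝ) + 1) ^ 2 := by
      simpa using (summable_nat_add_iff 1).2 (Real.summable_one_div_nat_pow.2 one_lt_two)
    have hk : ∀ k : ℕ, 0 ≤ 1 / ((k : ℝ) + 1) ^ 2 := fun k => by positivity
    refine ⟨C * ∑' k : ℕ, 1 / ((k : ℝ) + 1) ^ 2, mul_nonneg hC0 (tsum_nonneg hk), fun n => ?_⟩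
    rw [esq]
    calc _ ≤ ∑ k ∈ range n, C * (1 / ((k : ℝ) + 1) ^ 2) := by
          refine Finset.sum_le_sum fun k _ => ?_
          rw [mul_one_div]
          gcongr
          exact hC k
      _ = C * ∑ k ∈ range n, 1 / ((k : ℝ) + 1) ^ 2 := by rw [Finset.mul_sum]
      _ ≤ _ := mul_le_mul_of_nonneg_left (hs.sum_le_tsum _ fun k _ => hk k) hC0

/-- Bounds on the second derivative are integrated twice; on `[0, u]` the bound `sin^{2N}` is at
most its value at `u`, so the shape of the bound persists from `a` to `a + 1`. -/
theorem Rw_bounds (a : ℕ) : ∃ C : ℝ, 0 ≤ C ∧ ∀ N u, 0 ≤ u → u ≤ π / 2 →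
    0 ≤ Rw a N u ∧ Rw a N u ≤ C * (sin u ^ (2 * N) / cw N) := by
  have hS : ∀ N u, 0 ≤ sin u ^ (2 * N) / cw N := fun N u => by
    have := cw_pos N
    rw [pow_mul]; positivity
  have main : ∀ a : ℕ, (∃ C : ℝ, 0 ≤ C ∧ ∀ N u, 0 ≤ u → u ≤ π / 2 →
      0 ≤ RwDD a N u ∧ RwDD a N u ≤ C * (sin u ^ (2 * N) / cw N)) →
      (∃ C : ℝ, 0 ≤ C ∧ ∀ N u, 0 ≤ u → u ≤ π / 2 →
      0 ≤ Rw a N u ∧ Rw a N u ≤ C * (sin u ^ (2 * N) / cw N)) := by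
    rintro a ⟨C, hC0, hC⟩
    refine ⟨C * (π / 2) ^ 2 / 2, by positivity, fun N u h0 h1 => ⟨?_, ?_⟩⟩
    · exact nonneg_of_second_deriv h0 (Rw_hasDerivAt a N) (RwD_hasDerivAt a N) (Rw_at_zero a N)
        (RwD_at_zero a N) fun x hx0 hxu => (hC N x hx0 (hxu.trans h1)).1
    · set M := C * (sin u ^ (2 * N) / cw N) with hM
      have hM0 : 0 ≤ M := mul_nonneg hC0 (hS N u)
      have key : 0 ≤ M * u ^ 2 / 2 - Rw a N u := by
        refine nonneg_of_second_deriv (g := fun x => M * x ^ 2 / 2 - Rw a N x)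
          (g' := fun x => M * x - RwD a N x) (g'' := fun x => M - RwDD a N x) h0
          (fun x => ?_) (fun x => ?_) (by simp [Rw_at_zero]) (by simp [RwD_at_zero]) ?_
        · refine HasDerivAt.sub ?_ (Rw_hasDerivAt a N x)
          have := ((hasDerivAt_pow 2 x).const_mul M).div_const 2
          convert! this using 1
          simp
          ring
        · refine HasDerivAt.sub ?_ (RwD_hasDerivAt a N x)
          simpa using (hasDerivAt_id x).const_mul M
        · intro x hx0 hxu
          have hx := (hC N x hx0 (hxu.trans h1)).2
          have hsin : sin x ≤ sin u := sin_le_sin_of_le_of_le_pi_div_two (by linarith) h1 hxu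
          have hs0 : 0 ≤ sin x := sin_nonneg_of_nonneg_of_le_pi hx0 (by linarith [pi_pos])
          have hc := cw_pos N
          have : C * (sin x ^ (2 * N) / cw N) ≤ M := by rw [hM]; gcongr
          linarith
      have : M * u ^ 2 / 2 ≤ M * (π / 2) ^ 2 / 2 := by gcongr
      have e : C * (π / 2) ^ 2 / 2 * (sin u ^ (2 * N) / cw N) = M * (π / 2) ^ 2 / 2 := by
        rw [hM]; ring
      linarith
  induction a with
  | zero =>
    refine main 0 ⟨1, zero_le_one, fun N u _ _ => ?_⟩
    rw [RwDD_zero_left, one_mul]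
    exact ⟨hS N u, le_rfl⟩
  | succ a ih =>
    obtain ⟨C, hC0, hC⟩ := ih
    obtain ⟨E, hE0, hE⟩ := esq_le (a + 1)
    refine main (a + 1) ⟨C + E / 4 ^ (a + 1), by positivity, fun N u h0 h1 => ?_⟩
    rw [RwDD_succ, add_mul]
    obtain ⟨h2, h3⟩ := hC N u h0 h1
    have h4 := esq_nonneg (a + 1) N
    have h5 := hS N u
    refine ⟨by positivity, ?_⟩
    have := hE N
    gcongr

/-- `u cot u`, in a form that is continuous at 0. -/
noncomputable def κ (u : ℝ) : ℝ := cos u / sinc u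

theorem sinc_pos {u : ℝ} (h0 : 0 ≤ u) (h1 : u ≤ π / 2) : 0 < sinc u := by
  rcases h0.eq_or_lt with rfl | h
  · simp
  · rw [sinc_of_ne_zero h.ne']
    exact div_pos (sin_pos_of_pos_of_lt_pi h (by linarith [pi_pos])) h

theorem κ_continuousOn : ContinuousOn κ (Set.uIcc 0 (π / 2)) := by
  rw [Set.uIcc_of_le (by positivity)]
  exact continuous_cos.continuousOn.div continuous_sinc.continuousOn
    fun u hu => (sinc_pos hu.1 hu.2).ne'

theorem κ_of_ne_zero {u : ℝ} (h : u ≠ 0) : κ u = u * cos u / sin u := by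
  rw [κ, sinc_of_ne_zero h]
  field_simp

/-- The integral `∫_0^{π/2} u^{2a+2}/(2a+2)! · (π/2-u)^{2b+1}/(2b+1)! · cot u du`, with `u cot u`
written as `κ u`. -/
noncomputable def Iw (a b : ℕ) : ℝ :=
  ∫ u in (0 : ℝ)..(π / 2), u ^ (2 * a + 1) / ((2 * a + 2).factorial : ℝ) * Qw (2 * b + 1) u * κ u

/-- Integration of the expansion of `u^{2a+2}/(2a+2)!` term by term. The remainder after `N + 1`
terms integrates to at most a constant times `tw b (N + 1) / (N + 1)`. -/
theorem Iw_hasSum (a b : ℕ) :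
    HasSum (fun n : ℕ => αw a n * (Jw b (n + 1) / (2 * n + 2))) (Iw a b) := by
  have hnn : ∀ n : ℕ, 0 ≤ αw a n * (Jw b (n + 1) / (2 * n + 2)) := fun n =>
    mul_nonneg (αw_nonneg _ _) (div_nonneg (Jw_nonneg _ _) (by positivity))
  rw [hasSum_iff_tendsto_nat_of_nonneg hnn]
  obtain ⟨C, hC0, hC⟩ := Rw_bounds a
  obtain ⟨M, hM⟩ := tw_bdd b
  have hQc := Qw_continuous (2 * b + 1)
  have iA : IntervalIntegrable (fun u => u ^ (2 * a + 1) / ((2 * a + 2).factorial : ℝ) *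
      Qw (2 * b + 1) u * κ u) MeasureTheory.volume 0 (π / 2) := by
    apply ContinuousOn.intervalIntegrable
    exact (by fun_prop : Continuous fun u : ℝ => u ^ (2 * a + 1) / ((2 * a + 2).factorial : ℝ) *
      Qw (2 * b + 1) u).continuousOn.mul κ_continuousOn
  have iT : ∀ n, IntervalIntegrable (fun u => αw a n * (sin u ^ (2 * n + 1) * cos u *
      Qw (2 * b + 1) u)) MeasureTheory.volume 0 (π / 2) := fun n => by
    apply Continuous.intervalIntegrable; fun_prop
  have iS : ∀ N, IntervalIntegrable (fun u => ∑ n ∈ range N, αw a n * (sin u ^ (2 * n + 1) *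
      cos u * Qw (2 * b + 1) u)) MeasureTheory.volume 0 (π / 2) := fun N => by
    apply Continuous.intervalIntegrable; fun_prop
  have hP : ∀ N, ∑ n ∈ range N, αw a n * (Jw b (n + 1) / (2 * n + 2)) =
      ∫ u in (0 : ℝ)..(π / 2), ∑ n ∈ range N, αw a n * (sin u ^ (2 * n + 1) * cos u *
      Qw (2 * b + 1) u) := fun N => by
    rw [intervalIntegral.integral_finsetSum fun n _ => iT n]
    refine Finset.sum_congr rfl fun n _ => ?_
    rw [intervalIntegral.integral_const_mul, integral_sin_cos_Q]
  have hR : ∀ N u, u ∈ Set.Ioo 0 (π / 2) →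
      u ^ (2 * a + 1) / ((2 * a + 2).factorial : ℝ) * Qw (2 * b + 1) u * κ u -
        ∑ n ∈ range N, αw a n * (sin u ^ (2 * n + 1) * cos u * Qw (2 * b + 1) u) =
      Rw a N u * (Qw (2 * b + 1) u * cos u / sin u) := fun N u hu => by
    have hs := (sin_pos_of_pos_of_lt_pi hu.1 (by linarith [pi_pos, hu.2])).ne'
    rw [κ_of_ne_zero hu.1.ne', Rw, sub_mul, Finset.sum_mul]
    congr 1
    · ring
    · refine Finset.sum_congr rfl fun n _ => ?_
      field_simp
      ring
  have hw : ∀ u ∈ Set.Ioo 0 (π / 2), 0 ≤ Qw (2 * b + 1) u * cos u / sin u := fun u hu => by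
    have h1 := Qw_nonneg (2 * b + 1) hu.2.le
    have h2 := cos_nonneg_of_mem_Icc ⟨by linarith [hu.1, pi_pos], hu.2.le⟩
    have h3 := sin_pos_of_pos_of_lt_pi hu.1 (by linarith [pi_pos, hu.2])
    positivity
  have lo : ∀ N, ∑ n ∈ range N, αw a n * (Jw b (n + 1) / (2 * n + 2)) ≤ Iw a b := fun N => by
    rw [hP]
    refine intervalIntegral.integral_mono_on_of_le_Ioo (by positivity) (iS N) iA fun u hu => ?_
    have h1 := hR N u hu
    have h2 := mul_nonneg (hC N u hu.1.le hu.2.le).1 (hw u hu)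
    linarith
  have hi : ∀ N : ℕ, Iw a b - C * (π / 2) / 4 ^ b * M * (1 / ((N : ℝ) + 1)) / 2 ≤
      ∑ n ∈ range (N + 1), αw a n * (Jw b (n + 1) / (2 * n + 2)) := fun N => by
    have hc := cw_pos (N + 1)
    have iB : IntervalIntegrable (fun u => C / cw (N + 1) * (sin u ^ (2 * N + 1) * cos u *
      Qw (2 * b + 1) u)) MeasureTheory.volume 0 (π / 2) := by
      apply Continuous.intervalIntegrable; fun_prop
    have h : Iw a b - ∑ n ∈ range (N + 1), αw a n * (Jw b (n + 1) / (2 * n + 2)) ≤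
        C / cw (N + 1) * (Jw b (N + 1) / (2 * N + 2)) := by
      rw [hP, Iw, ← intervalIntegral.integral_sub iA (iS _), ← integral_sin_cos_Q,
        ← intervalIntegral.integral_const_mul]
      refine intervalIntegral.integral_mono_on_of_le_Ioo (by positivity) (iA.sub (iS _)) iB
        fun u hu => ?_
      rw [hR _ u hu]
      have hs := (sin_pos_of_pos_of_lt_pi hu.1 (by linarith [pi_pos, hu.2])).ne'
      refine (mul_le_mul_of_nonneg_right (hC (N + 1) u hu.1.le hu.2.le).2 (hw u hu)).trans
        (le_of_eq ?_)
      field_simp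
      ring
    have e : C / cw (N + 1) * (Jw b (N + 1) / (2 * N + 2)) =
        C * (π / 2) / 4 ^ b * tw b (N + 1) * (1 / ((N : ℝ) + 1)) / 2 := by
      rw [tw]
      have := pi_pos
      field_simp
    have h2 : C * (π / 2) / 4 ^ b * tw b (N + 1) * (1 / ((N : ℝ) + 1)) / 2 ≤
        C * (π / 2) / 4 ^ b * M * (1 / ((N : ℝ) + 1)) / 2 := by
      have := hM (N + 1)
      gcongr
    linarith
  rw [← Filter.tendsto_add_atTop_iff_nat 1]
  refine tendsto_of_tendsto_of_tendsto_of_le_of_le ?_ tendsto_const_nhds hi fun N => lo (N + 1)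
  simpa using (((tendsto_one_div_add_atTop_nhds_zero_nat (𝕜 := ℝ)).const_mul
    (C * (π / 2) / 4 ^ b * M)).div_const 2).const_sub (Iw a b)

theorem H_eq_Iw (a b : ℕ) : H a b = 16 * 4 ^ (a + b) / π * Iw a b := by
  refine H_eq_of_hasSum tw tw_zero tw_nonneg tw_rec tw_tendsto a b ?_
  convert! (Iw_hasSum a b).mul_left (16 * 4 ^ (a + b) / π) using 1
  funext n
  have := (cw_pos (n + 1)).ne'
  have := pi_pos
  simp only [tw, αw]
  field_simp
  ring

/-! ### The cotangent and the zeta values at even integers -/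

/-- The Beta integral `B(m+1, k+1)`, rescaled to `[0, π/2]`. -/
theorem integral_pow_mul_Qw (k m : ℕ) :
    ∫ u in (0 : ℝ)..(π / 2), u ^ m / (m.factorial : ℝ) * Qw k u =
      (π / 2) ^ (m + k + 1) / ((m + k + 1).factorial : ℝ) := by
  induction k generalizing m with
  | zero =>
    have h := intervalIntegral.integral_eq_sub_of_hasDerivAt
      (a := (0 : ℝ)) (b := π / 2) (fun u _ => pow_div_hasDerivAt m u)
      (by apply Continuous.intervalIntegrable; fun_prop)
    simpa [Qw_zero] using h
  | succ k ih =>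
    have hQ := Qw_continuous (k + 1)
    have hQ' := Qw_continuous k
    have i1 : IntervalIntegrable (fun u : ℝ => u ^ m / (m.factorial : ℝ) * Qw (k + 1) u)
      MeasureTheory.volume 0 (π / 2) := by apply Continuous.intervalIntegrable; fun_prop
    have i2 : IntervalIntegrable (fun u : ℝ => u ^ (m + 1) / ((m + 1).factorial : ℝ) * Qw k u)
      MeasureTheory.volume 0 (π / 2) := by apply Continuous.intervalIntegrable; fun_prop
    have hd : ∀ u : ℝ, HasDerivAt
        (fun u : ℝ => u ^ (m + 1) / ((m + 1).factorial : ℝ) * Qw (k + 1) u)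
        (u ^ m / (m.factorial : ℝ) * Qw (k + 1) u -
          u ^ (m + 1) / ((m + 1).factorial : ℝ) * Qw k u) u := fun u => by
      have h := (pow_div_hasDerivAt m u).mul (Qw_hasDerivAt k u)
      convert! h using 1
      ring
    have h := intervalIntegral.integral_eq_sub_of_hasDerivAt
      (a := (0 : ℝ)) (b := π / 2) (fun u _ => hd u) (i1.sub i2)
    rw [intervalIntegral.integral_sub i1 i2, ih, Qw_end] at h
    rw [show m + (k + 1) + 1 = m + 1 + k + 1 by ring]
    simp only [ne_eq, Nat.add_eq_zero_iff, one_ne_zero, and_false, not_false_eq_true, zero_pow,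
      zero_div, zero_mul, mul_zero, sub_zero] at h
    linarith

/-- The real number `ζ(2n)`, with `ζ(0) = -1/2`. -/
noncomputable def zr : ℕ → ℝ
  | 0 => -1 / 2
  | n + 1 => ∑' k : ℕ, 1 / ((k : ℝ) + 1) ^ (2 * (n + 1))

theorem riemannZeta_two_mul (n : ℕ) : riemannZeta (2 * n) = (zr n : ℂ) := by
  cases n with
  | zero => simp [zr, riemannZeta_zero]
  | succ n =>
    have e : (2 * ((n + 1 : ℕ) : ℂ)) = ((2 * (n + 1) : ℕ) : ℂ) := by push_cast; ring
    have h1 : 1 < (((2 * (n + 1) : ℕ) : ℂ)).re := by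
      rw [Complex.natCast_re]
      exact_mod_cast (by omega : 1 < 2 * (n + 1))
    rw [e, zeta_eq_tsum_one_div_nat_add_one_cpow h1, zr, Complex.ofReal_tsum]
    refine tsum_congr fun k => ?_
    rw [Complex.cpow_natCast]
    push_cast
    rfl

theorem summable_zr_aux (n : ℕ) : Summable fun k : ℕ => 1 / ((k : ℝ) + 1) ^ (2 * (n + 1)) := by
  simpa using (summable_nat_add_iff 1).2
    (Real.summable_one_div_nat_pow.2 (by omega : 1 < 2 * (n + 1)))

theorem zr_bound (n : ℕ) : |zr n| ≤ 2 := by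
  cases n with
  | zero => norm_num [zr, abs_le]
  | succ n =>
    have h2 : HasSum (fun k : ℕ => 1 / ((k : ℝ) + 1) ^ 2) (π ^ 2 / 6) := by
      simpa using (hasSum_nat_add_iff' 1).2 hasSum_zeta_two
    have hle : zr (n + 1) ≤ π ^ 2 / 6 := by
      rw [zr, ← h2.tsum_eq]
      refine (summable_zr_aux n).tsum_le_tsum (fun k => ?_) h2.summable
      have : (0 : ℝ) ≤ k := Nat.cast_nonneg k
      gcongr
      · linarith
      · omega
    have h0 : 0 ≤ zr (n + 1) := tsum_nonneg fun k => by positivity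
    rw [abs_of_nonneg h0]
    have := pi_lt_d2
    have := pi_pos
    nlinarith

/-- The Mittag-Leffler expansion of the cotangent at a real point of `(0, 1)`. -/
theorem hasSum_cot_real {x : ℝ} (h0 : 0 < x) (h1 : x < 1) :
    HasSum (fun k : ℕ => x ^ 2 / (((k : ℝ) + 1) ^ 2 - x ^ 2))
      ((1 - π * x * cos (π * x) / sin (π * x)) / 2) := by
  have hx : (x : ℂ) ∈ Complex.integerComplement := by
    rintro ⟨m, hm⟩
    have hm' : (m : ℝ) = x := by exact_mod_cast hm
    rw [← hm'] at h0 h1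
    have h0' : 0 < m := by exact_mod_cast h0
    have h1' : m < 1 := by exact_mod_cast h1
    omega
  have h := cot_series_rep' hx
  have hs := (summable_cotTerm hx).hasSum
  have e : ∀ k : ℕ, cotTerm (x : ℂ) k = ((-2 / x * (x ^ 2 / (((k : ℝ) + 1) ^ 2 - x ^ 2)) : ℝ) : ℂ) := by
    intro k
    have h2 : x - (k + 1) ≠ 0 := by
      have : (0 : ℝ) ≤ k := Nat.cast_nonneg k
      linarith
    have h3 : x + (k + 1) ≠ 0 := by positivity
    have h4 : ((k : ℝ) + 1) ^ 2 - x ^ 2 ≠ 0 := by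
      have : ((k : ℝ) + 1) ^ 2 - x ^ 2 = -((x - (k + 1)) * (x + (k + 1))) := by ring
      rw [this]
      exact neg_ne_zero.2 (mul_ne_zero h2 h3)
    have : cotTerm (x : ℂ) k = ((1 / (x - (k + 1)) + 1 / (x + (k + 1)) : ℝ) : ℂ) := by
      simp [cotTerm]
    rw [this]
    congr 1
    field_simp
    ring
  have h' : ∑' k : ℕ, cotTerm (x : ℂ) k = ((π * (cos (π * x) / sin (π * x)) - 1 / x : ℝ) : ℂ) := by
    refine h.symm.trans ?_
    rw [Complex.cot]
    push_cast
    rfl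
  rw [h'] at hs
  simp_rw [e] at hs
  have hs2 := (Complex.hasSum_ofReal.1 hs).mul_left (-x / 2)
  convert! hs2 using 1
  · funext k
    field_simp
  · field_simp
    ring

/-- The generating function `∑ ζ(2n) x^{2n} = -(πx/2) cot(πx)`: expand each Mittag-Leffler term as
a geometric series and exchange the two summations of nonnegative terms. -/
theorem hasSum_zr {x : ℝ} (h0 : 0 < x) (h1 : x < 1) :
    HasSum (fun n : ℕ => zr n * x ^ (2 * n)) (-(π * x * cos (π * x) / sin (π * x)) / 2) := by
  have hcot := hasSum_cot_real h0 h1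
  have hgeo : ∀ k : ℕ, HasSum (fun n : ℕ => (x ^ 2 / ((k : ℝ) + 1) ^ 2) ^ (n + 1))
      (x ^ 2 / (((k : ℝ) + 1) ^ 2 - x ^ 2)) := fun k => by
    have hk : (0 : ℝ) ≤ k := Nat.cast_nonneg k
    have hlt : x ^ 2 < ((k : ℝ) + 1) ^ 2 := by gcongr; linarith
    have hr : x ^ 2 / ((k : ℝ) + 1) ^ 2 < 1 := by
      rw [div_lt_one (by positivity)]; exact hlt
    have h := (hasSum_geometric_of_lt_one (by positivity) hr).mul_left (x ^ 2 / ((k : ℝ) + 1) ^ 2)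
    convert! h using 1
    · funext n; ring
    · have : ((k : ℝ) + 1) ^ 2 - x ^ 2 ≠ 0 := by linarith
      have : 1 - x ^ 2 / ((k : ℝ) + 1) ^ 2 ≠ 0 := by linarith
      field_simp
  have hprod : Summable fun p : ℕ × ℕ => (x ^ 2 / ((p.1 : ℝ) + 1) ^ 2) ^ (p.2 + 1) := by
    rw [summable_prod_of_nonneg (fun p => by positivity)]
    refine ⟨fun k => (hgeo k).summable, ?_⟩
    simp_rw [fun k => (hgeo k).tsum_eq]
    exact hcot.summable
  have hval := hprod.hasSum.prod_fiberwise hgeo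
  have hS := hval.unique hcot
  have hswap := ((Equiv.prodComm ℕ ℕ).hasSum_iff.2 hprod.hasSum).prod_fiberwise
    (g := fun n => zr (n + 1) * x ^ (2 * (n + 1))) (fun n => by
      have := (summable_zr_aux n).hasSum.mul_right (x ^ (2 * (n + 1)))
      convert! this using 1
      funext k
      simp only [Function.comp, Equiv.prodComm_apply, Prod.swap]
      rw [div_pow, ← pow_mul, ← pow_mul]
      ring)
  rw [hS] at hswap
  rw [← hasSum_nat_add_iff' 1]
  convert! hswap using 1
  simp [zr]
  ring

/-- Integrating the generating function of `ζ(2n)` at `x = u/π ≤ 1/2` term by term. -/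
theorem Iw_hasSum_zr (a b : ℕ) :
    HasSum (fun n : ℕ => zr n * (Nat.factorial (2 * n + 2 * a + 1) : ℝ) /
        (2 ^ (2 * n) * (Nat.factorial (2 * n + 2 * a + 2 * b + 3) : ℝ)))
      (-(Iw a b * (Nat.factorial (2 * a + 2) : ℝ) / (2 * (π / 2) ^ (2 * a + 2 * b + 3)))) := by
  have hp := pi_pos
  have hQc := Qw_continuous (2 * b + 1)
  have hsum : HasSum (fun n : ℕ => ∫ u in (0 : ℝ)..(π / 2),
      zr n * (u / π) ^ (2 * n) * (u ^ (2 * a + 1) * Qw (2 * b + 1) u))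
      (∫ u in (0 : ℝ)..(π / 2), -κ u / 2 * (u ^ (2 * a + 1) * Qw (2 * b + 1) u)) := by
    have hgs : Summable fun n : ℕ => (2 : ℝ) * (1 / 4) ^ n :=
      (summable_geometric_of_lt_one (by norm_num) (by norm_num)).mul_left 2
    refine intervalIntegral.hasSum_integral_of_dominated_convergence
      (fun n u => 2 * (1 / 4) ^ n * (u ^ (2 * a + 1) * Qw (2 * b + 1) u))
      (fun n => (Continuous.aestronglyMeasurable (by fun_prop))) (fun n => ?_) ?_ ?_ ?_
    · refine Filter.Eventually.of_forall fun u hu => ?_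
      rw [Set.uIoc_of_le (by positivity)] at hu
      have h1 := Qw_nonneg (2 * b + 1) hu.2
      have h2 := hu.1
      have h3 : u / π ≤ 1 / 2 := by rw [div_le_iff₀ hp]; linarith [hu.2]
      have h4 : 0 ≤ u / π := by positivity
      have h5 := zr_bound n
      rw [norm_eq_abs, abs_mul, abs_mul, abs_of_nonneg (by positivity : 0 ≤ (u / π) ^ (2 * n)),
        abs_of_nonneg (by positivity : 0 ≤ u ^ (2 * a + 1) * Qw (2 * b + 1) u)]
      have h6 : (u / π) ^ (2 * n) ≤ (1 / 4) ^ n := by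
        rw [pow_mul]
        gcongr
        nlinarith
      gcongr
    · exact Filter.Eventually.of_forall fun u _ => hgs.mul_right _
    · simp_rw [tsum_mul_right]
      apply Continuous.intervalIntegrable; fun_prop
    · refine Filter.Eventually.of_forall fun u hu => ?_
      rw [Set.uIoc_of_le (by positivity)] at hu
      have h := hasSum_zr (x := u / π) (div_pos hu.1 hp)
        (by rw [div_lt_one hp]; linarith [hu.2])
      rw [mul_div_cancel₀ _ hp.ne', ← κ_of_ne_zero hu.1.ne'] at h
      exact h.mul_right _
  have hf := hsum.mul_left (1 / (π / 2) ^ (2 * a + 2 * b + 3))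
  convert! hf using 1
  · funext n
    have hb := integral_pow_mul_Qw (2 * b + 1) (2 * n + 2 * a + 1)
    have e : ∀ u : ℝ, zr n * (u / π) ^ (2 * n) * (u ^ (2 * a + 1) * Qw (2 * b + 1) u) =
        zr n * (2 * n + 2 * a + 1).factorial / π ^ (2 * n) *
          (u ^ (2 * n + 2 * a + 1) / ((2 * n + 2 * a + 1).factorial : ℝ) * Qw (2 * b + 1) u) := by
      intro u
      rw [div_pow]
      have : ((2 * n + 2 * a + 1).factorial : ℝ) ≠ 0 := by positivity
      field_simp
      ring
    simp_rw [e]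
    rw [intervalIntegral.integral_const_mul, hb,
      show 2 * n + 2 * a + 1 + (2 * b + 1) + 1 = 2 * n + 2 * a + 2 * b + 3 by ring]
    have hq : (π / 2) ^ (2 * n + 2 * a + 2 * b + 3) =
      π ^ (2 * n) / 2 ^ (2 * n) * (π / 2) ^ (2 * a + 2 * b + 3) := by
      rw [← div_pow, ← pow_add]; congr 1; ring
    rw [hq]
    have : ((2 * n + 2 * a + 2 * b + 3).factorial : ℝ) ≠ 0 := by positivity
    have : (π / 2) ^ (2 * a + 2 * b + 3) ≠ 0 := by positivity
    field_simp
  · have e : ∀ u : ℝ, -κ u / 2 * (u ^ (2 * a + 1) * Qw (2 * b + 1) u) =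
        -((2 * a + 2).factorial : ℝ) / 2 *
        (u ^ (2 * a + 1) / ((2 * a + 2).factorial : ℝ) * Qw (2 * b + 1) u * κ u) := fun u => by
      have : ((2 * a + 2).factorial : ℝ) ≠ 0 := by positivity
      field_simp
    simp_rw [e]
    rw [intervalIntegral.integral_const_mul, ← Iw]
    field_simp

/-- Lupu's first conjecture, in the factorial-ratio form:
`H(a,b) = -(4π^{2a+2b+2}/(2a+2)!) ∑_{n≥0} ζ(2n)(2n+2a+1)!/(2^{2n}(2n+2a+2b+3)!)`. -/
theorem lupu_H_factorial_form (a b : ℕ) :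
    (H a b : ℂ) = -(4 * (π : ℂ) ^ (2 * a + 2 * b + 2) / (Nat.factorial (2 * a + 2) : ℂ)) *
      ∑' n : ℕ, riemannZeta (2 * n) * (Nat.factorial (2 * n + 2 * a + 1) : ℂ) /
        (2 ^ (2 * n) * (Nat.factorial (2 * n + 2 * a + 2 * b + 3) : ℂ)) := by
  have h := (Complex.hasSum_ofReal.2 (Iw_hasSum_zr a b)).tsum_eq
  simp_rw [riemannZeta_two_mul]
  push_cast at h
  rw [div_pow] at h
  rw [h, H_eq_Iw]
  have hp : (π : ℂ) ≠ 0 := by exact_mod_cast pi_ne_zero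
  have hf : (Nat.factorial (2 * a + 2) : ℂ) ≠ 0 := by exact_mod_cast Nat.factorial_ne_zero _
  have e4 : (4 : ℂ) ^ (a + b) = 2 ^ (2 * a + 2 * b) := by
    rw [← mul_add, pow_mul]; norm_num
  push_cast
  rw [e4]
  field_simp
  ring
end
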